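/- Suppose the uniform observability condition holds: for every ε > 0 there exists δ > 0 such that for all μ, ν ∈ P(E), ‖Q_μ − Q_ν‖_{TV} < δ implies ‖μ − ν‖ < ε. Then the filter transition kernel Π admits a unique Π-invariant probability measure on P(E). -/

import Mathlib

open MeasureTheory Filter Topology ENNReal

/-- `P(E)`: probability vectors on a countable set `E`, with the topology of
pointwise (equivalently, weak) convergence inherited from `E → ℝ`. -/
abbrev ProbVec (E : Type*) := {p : E → ℝ // (∀ i, 0 ≤ p i) ∧ HasSum p 1}

/-- Row-vector/matrix product `(p M(y))_j = ∑_i p_i M_{ij}(y)`. -/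
noncomputable def rowMul {E F : Type*} (M : F → E → E → ℝ) (p : E → ℝ) (y : F) : E → ℝ :=
  fun j => ∑' i, p i * M y i j

/-- Iterated product `p M(y₁)⋯M(yₙ)` along a list of observations. -/
noncomputable def rowIter {E F : Type*} (M : F → E → E → ℝ) (p : E → ℝ) (ys : List F) : E → ℝ :=
  ys.foldl (rowMul M) p

/-- `p 1 = ∑_j p_j`. -/
noncomputable def rowTot {E : Type*} (p : E → ℝ) : ℝ := ∑' j, p j

/-- One step of the filter: `μ ↦ μM(y)/(μM(y)1)` (junk value `μ` when undefined). -/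
noncomputable def filterStep {E F : Type*} (M : F → E → E → ℝ) (μ : ProbVec E) (y : F) :
    ProbVec E := by
  classical
  exact if h : ∃ ν : ProbVec E, ∀ j,
      (ν : E → ℝ) j * rowTot (rowMul M (μ : E → ℝ) y) = rowMul M (μ : E → ℝ) y j
    then h.choose else μ

/-- The filter `μM(y₁)⋯M(yₙ)/(μM(y₁)⋯M(yₙ)1)` (junk value `μ` when undefined). -/
noncomputable def filterList {E F : Type*} (M : F → E → E → ℝ) (μ : ProbVec E) (ys : List F) :
    ProbVec E := by
  classical
  exact if h : ∃ ν : ProbVec E, ∀ j,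
      (ν : E → ℝ) j * rowTot (rowIter M (μ : E → ℝ) ys) = rowIter M (μ : E → ℝ) ys j
    then h.choose else μ

/-- The filter `π_n^μ(y)` as a function of the observation path `y : ℕ → F`
(the coordinate `y k` represents the observation `y_{k+1}`). -/
noncomputable def filterSeq {E F : Type*} (M : F → E → E → ℝ) (μ : ProbVec E) (y : ℕ → F)
    (n : ℕ) : ProbVec E :=
  filterList M μ (List.ofFn fun k : Fin n => y k)

/-- The filter transition kernel `Π`, acting on functions:
`Πf(μ) = ∫ f(μM(y)/(μM(y)1)) ⬝ (μM(y)1) φ(dy)`. -/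
noncomputable def filterKernel {E F : Type*} [MeasurableSpace F] (M : F → E → E → ℝ)
    (φ : Measure F) (f : ProbVec E → ℝ) (μ : ProbVec E) : ℝ :=
  ∫ y, f (filterStep M μ y) * rowTot (rowMul M (μ : E → ℝ) y) ∂φ

/-- Bounded continuous real functions on `P(E)`. -/
def IsBddCont {E : Type*} (f : ProbVec E → ℝ) : Prop :=
  Continuous f ∧ ∃ C : ℝ, ∀ μ, |f μ| ≤ C

/-- A probability measure `𝕄` on `P(E)` is `Π`-invariant if `∫ Πf d𝕄 = ∫ f d𝕄`
for every bounded continuous `f`. -/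
def IsPiInvariant {E F : Type*} [MeasurableSpace F] (M : F → E → E → ℝ) (φ : Measure F)
    (𝕄 : ProbabilityMeasure (ProbVec E)) : Prop :=
  ∀ f : ProbVec E → ℝ, IsBddCont f →
    ∫ μ, filterKernel M φ f μ ∂(𝕄 : Measure (ProbVec E)) =
      ∫ μ, f μ ∂(𝕄 : Measure (ProbVec E))

/-- The signal transition matrix `P_{ij} = ∫ M_{ij}(y) φ(dy)`. -/
noncomputable def transMat {E F : Type*} [MeasurableSpace F] (M : F → E → E → ℝ)
    (φ : Measure F) : E → E → ℝ :=
  fun i j => ∫ y, M y i j ∂φ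

/-- Powers of a transition matrix on a countable state space. -/
noncomputable def matPow {E : Type*} [DecidableEq E] (P : E → E → ℝ) : ℕ → E → E → ℝ
  | 0 => fun i j => if i = j then 1 else 0
  | n + 1 => fun i j => ∑' k, matPow P n i k * P k j

/-- Total variation (ℓ¹) distance on `P(E)`. -/
noncomputable def tvDist {E : Type*} (p q : ProbVec E) : ℝ :=
  ∑' i, |(p : E → ℝ) i - (q : E → ℝ) i|

/-- Total variation distance `‖P − Q‖ = 2 sup_A |P(A) − Q(A)|` between two measures. -/
noncomputable def tvMeasure {α : Type*} [MeasurableSpace α] (P Q : Measure α) : ℝ≥0∞ :=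
  2 * (⨆ (A : Set α) (_ : MeasurableSet A), ((P A - Q A) + (Q A - P A)))
open MeasureTheory Filter Topology ENNReal

section Abstract
variable {E F : Type*}

/-- action in ENNReal -/
noncomputable def eact (N : F → E → E → ℝ≥0∞) (a : E → ℝ≥0∞) (y : F) : E → ℝ≥0∞ :=
  fun j => ∑' i, a i * N y i j

noncomputable def etot (a : E → ℝ≥0∞) : ℝ≥0∞ := ∑' j, a j

noncomputable def pact (N : F → E → E → ℝ≥0∞) (p : (E → ℝ≥0∞) × (E → ℝ≥0∞)) (y : F) :
    (E → ℝ≥0∞) × (E → ℝ≥0∞) := (eact N p.1 y, eact N p.2 y)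

noncomputable def KK [MeasurableSpace F] (N : F → E → E → ℝ≥0∞) (φ : Measure F)
    (G : (E → ℝ≥0∞) × (E → ℝ≥0∞) → ℝ≥0∞) (p : (E → ℝ≥0∞) × (E → ℝ≥0∞)) : ℝ≥0∞ :=
  ∫⁻ y, G (pact N p y) ∂φ

lemma etot_smul (c : ℝ≥0∞) (a : E → ℝ≥0∞) : etot (c • a) = c * etot a := by
  simp [etot, ENNReal.tsum_mul_left]

lemma eact_smul (N : F → E → E → ℝ≥0∞) (c : ℝ≥0∞) (a : E → ℝ≥0∞) (y : F) :
    eact N (c • a) y = c • eact N a y := by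
  funext j
  simp [eact, ← ENNReal.tsum_mul_left, mul_assoc]

lemma etot_tsum (w : E → ℝ≥0∞) (as : E → E → ℝ≥0∞) :
    etot (fun j => ∑' i, w i * as i j) = ∑' i, w i * etot (as i) := by
  simp only [etot, ← ENNReal.tsum_mul_left]
  exact ENNReal.tsum_comm

lemma eact_tsum (N : F → E → E → ℝ≥0∞) (w : E → ℝ≥0∞) (as : E → E → ℝ≥0∞) (y : F) :
    eact N (fun j => ∑' i, w i * as i j) y = fun j => ∑' i, w i * eact N (as i) y j := by
  funext j
  simp only [eact, ← ENNReal.tsum_mul_left, ← ENNReal.tsum_mul_right]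
  rw [ENNReal.tsum_comm]
  simp only [mul_assoc]

lemma etot_eact (N : F → E → E → ℝ≥0∞) (a : E → ℝ≥0∞) (y : F) :
    etot (eact N a y) = ∑' i, a i * etot (N y i) := etot_tsum a (N y)

lemma etot_mono {a b : E → ℝ≥0∞} (h : a ≤ b) : etot a ≤ etot b := ENNReal.tsum_le_tsum h

lemma eact_mono (N : F → E → E → ℝ≥0∞) {a b : E → ℝ≥0∞} (h : a ≤ b) (y : F) :
    eact N a y ≤ eact N b y := fun j => ENNReal.tsum_le_tsum fun i => by gcongr; exact h i

variable [Countable E] [MeasurableSpace F] {N : F → E → E → ℝ≥0∞} {φ : Measure F}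

lemma measurable_etot : Measurable (etot : (E → ℝ≥0∞) → ℝ≥0∞) := by
  unfold etot
  exact Measurable.ennreal_tsum fun i => measurable_pi_apply i

lemma measurable_eact (hNm : ∀ i j, Measurable fun y => N y i j) :
    Measurable fun q : (E → ℝ≥0∞) × F => eact N q.1 q.2 := by
  refine measurable_pi_lambda _ fun j => ?_
  unfold eact
  refine Measurable.ennreal_tsum fun i => ?_
  exact ((measurable_pi_apply i).comp measurable_fst).mul ((hNm i j).comp measurable_snd)

lemma measurable_pact (hNm : ∀ i j, Measurable fun y => N y i j) :
    Measurable fun q : ((E → ℝ≥0∞) × (E → ℝ≥0∞)) × F => pact N q.1 q.2 := by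
  have := measurable_eact hNm
  unfold pact
  exact (this.comp ((measurable_fst.comp measurable_fst).prodMk measurable_snd)).prodMk
    (this.comp ((measurable_snd.comp measurable_fst).prodMk measurable_snd))

lemma measurable_pact_right (hNm : ∀ i j, Measurable fun y => N y i j)
    (p : (E → ℝ≥0∞) × (E → ℝ≥0∞)) : Measurable (pact N p) :=
  (measurable_pact hNm).comp (measurable_const.prodMk measurable_id)

lemma measurable_eact_right (hNm : ∀ i j, Measurable fun y => N y i j)
    (p : (E → ℝ≥0∞)) : Measurable (eact N p) :=
  (measurable_eact hNm).comp (measurable_const.prodMk measurable_id)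

lemma measurable_KK [SigmaFinite φ] (hNm : ∀ i j, Measurable fun y => N y i j)
    {G : (E → ℝ≥0∞) × (E → ℝ≥0∞) → ℝ≥0∞} (hG : Measurable G) : Measurable (KK N φ G) := by
  unfold KK
  exact Measurable.lintegral_prod_right' (f := fun q : ((E → ℝ≥0∞) × (E → ℝ≥0∞)) × F =>
    G (pact N q.1 q.2)) (hG.comp (measurable_pact hNm))

lemma measurable_KKn [SigmaFinite φ] (hNm : ∀ i j, Measurable fun y => N y i j)
    {G : (E → ℝ≥0∞) × (E → ℝ≥0∞) → ℝ≥0∞} (hG : Measurable G) (n : ℕ) :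
    Measurable ((KK N φ)^[n] G) := by
  induction n with
  | zero => exact hG
  | succ n ih => rw [Function.iterate_succ_apply']; exact measurable_KK hNm ih

lemma lintegral_etot (hNm : ∀ i j, Measurable fun y => N y i j)
    (hN : ∀ i, ∫⁻ y, etot (N y i) ∂φ = 1) (a : E → ℝ≥0∞) :
    ∫⁻ y, etot (eact N a y) ∂φ = etot a := by
  have hm : ∀ i, Measurable fun y => etot (N y i) := fun i =>
    measurable_etot.comp (measurable_pi_lambda _ fun j => hNm i j)
  simp only [etot_eact]
  rw [lintegral_tsum fun i => ((hm i).const_mul _).aemeasurable]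
  simp only [lintegral_const_mul _ (hm _), hN, mul_one]
  rfl

lemma ae_etot_lt (hNm : ∀ i j, Measurable fun y => N y i j)
    (hN : ∀ i, ∫⁻ y, etot (N y i) ∂φ = 1) {a : E → ℝ≥0∞} (ha : etot a < ∞) :
    ∀ᵐ y ∂φ, etot (eact N a y) < ∞ := by
  refine ae_lt_top (measurable_etot.comp (measurable_eact_right hNm a)) ?_
  rw [lintegral_etot hNm hN]; exact ha.ne

/-- a.e. invariant set -/
def AEInv (N : F → E → E → ℝ≥0∞) (φ : Measure F) (S : Set ((E → ℝ≥0∞) × (E → ℝ≥0∞))) : Prop :=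
  ∀ p ∈ S, ∀ᵐ y ∂φ, pact N p y ∈ S

omit [Countable E] in
lemma KKn_mono_on {S : Set ((E → ℝ≥0∞) × (E → ℝ≥0∞))} (hS : AEInv N φ S)
    {G G' : (E → ℝ≥0∞) × (E → ℝ≥0∞) → ℝ≥0∞} (h : ∀ p ∈ S, G p ≤ G' p) (n : ℕ) :
    ∀ p ∈ S, (KK N φ)^[n] G p ≤ (KK N φ)^[n] G' p := by
  induction n with
  | zero => exact h
  | succ n ih =>
    intro p hp
    rw [Function.iterate_succ_apply', Function.iterate_succ_apply']
    exact lintegral_mono_ae ((hS p hp).mono fun y hy => ih _ hy)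

omit [Countable E] in
lemma KKn_congr_on {S : Set ((E → ℝ≥0∞) × (E → ℝ≥0∞))} (hS : AEInv N φ S)
    {G G' : (E → ℝ≥0∞) × (E → ℝ≥0∞) → ℝ≥0∞} (h : ∀ p ∈ S, G p = G' p) (n : ℕ) :
    ∀ p ∈ S, (KK N φ)^[n] G p = (KK N φ)^[n] G' p := fun p hp =>
  le_antisymm (KKn_mono_on hS (fun p hp => (h p hp).le) n p hp)
    (KKn_mono_on hS (fun p hp => (h p hp).ge) n p hp)

omit [Countable E] in
lemma KKn_mono {G G' : (E → ℝ≥0∞) × (E → ℝ≥0∞) → ℝ≥0∞} (h : G ≤ G') (n : ℕ) :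
    (KK N φ)^[n] G ≤ (KK N φ)^[n] G' := fun p =>
  KKn_mono_on (S := Set.univ) (fun _ _ => Eventually.of_forall fun _ => trivial)
    (fun p _ => h p) n p trivial

lemma aeinv_fin (hNm : ∀ i j, Measurable fun y => N y i j)
    (hN : ∀ i, ∫⁻ y, etot (N y i) ∂φ = 1) :
    AEInv N φ {p | etot p.1 < ∞ ∧ etot p.2 < ∞} := by
  rintro p ⟨h1, h2⟩
  filter_upwards [ae_etot_lt hNm hN h1, ae_etot_lt hNm hN h2] with y a b using ⟨a, b⟩

lemma aeinv_dom (hNm : ∀ i j, Measurable fun y => N y i j)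
    (hN : ∀ i, ∫⁻ y, etot (N y i) ∂φ = 1) :
    AEInv N φ {p | p.1 ≤ p.2 ∧ etot p.2 < ∞} := by
  rintro p ⟨h1, h2⟩
  filter_upwards [ae_etot_lt hNm hN h2] with y b using ⟨eact_mono N h1 y, b⟩

omit [Countable E] in
lemma aeinv_diag : AEInv N φ {p | p.1 = p.2} := by
  intro p hp
  exact Eventually.of_forall fun y => by
    have : p.1 = p.2 := hp
    simp [pact, this]

lemma KKn_add [SigmaFinite φ] (hNm : ∀ i j, Measurable fun y => N y i j)
    {G G' : (E → ℝ≥0∞) × (E → ℝ≥0∞) → ℝ≥0∞} (hG : Measurable G) (n : ℕ) :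
    (KK N φ)^[n] (G + G') = (KK N φ)^[n] G + (KK N φ)^[n] G' := by
  induction n with
  | zero => rfl
  | succ n ih =>
    simp only [Function.iterate_succ_apply', ih]
    funext p
    exact lintegral_add_left ((measurable_KKn hNm hG n).comp (measurable_pact_right hNm p)) _

lemma KKn_smul [SigmaFinite φ] (hNm : ∀ i j, Measurable fun y => N y i j)
    {G : (E → ℝ≥0∞) × (E → ℝ≥0∞) → ℝ≥0∞} (hG : Measurable G) (c : ℝ≥0∞) (n : ℕ) :
    (KK N φ)^[n] (c • G) = c • (KK N φ)^[n] G := by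
  induction n with
  | zero => rfl
  | succ n ih =>
    simp only [Function.iterate_succ_apply', ih]
    funext p
    exact lintegral_const_mul _ ((measurable_KKn hNm hG n).comp (measurable_pact_right hNm p))

lemma KKn_iSup [SigmaFinite φ] (hNm : ∀ i j, Measurable fun y => N y i j)
    {G : ℕ → (E → ℝ≥0∞) × (E → ℝ≥0∞) → ℝ≥0∞} (hG : ∀ m, Measurable (G m)) (hmono : Monotone G)
    (n : ℕ) : (KK N φ)^[n] (fun p => ⨆ m, G m p) = fun p => ⨆ m, (KK N φ)^[n] (G m) p := by
  induction n with
  | zero => rfl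
  | succ n ih =>
    simp only [Function.iterate_succ_apply', ih]
    funext p
    refine lintegral_iSup (fun m => (measurable_KKn hNm (hG m) n).comp
      (measurable_pact_right hNm p)) ?_
    intro m m' h y
    exact KKn_mono (hmono h) n _

lemma KKn_etot1 (hNm : ∀ i j, Measurable fun y => N y i j)
    (hN : ∀ i, ∫⁻ y, etot (N y i) ∂φ = 1) (n : ℕ) :
    (KK N φ)^[n] (fun p => etot p.1) = fun p => etot p.1 := by
  induction n with
  | zero => rfl
  | succ n ih =>
    rw [Function.iterate_succ_apply', ih]; funext p; exact lintegral_etot hNm hN _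

lemma KKn_etot2 (hNm : ∀ i j, Measurable fun y => N y i j)
    (hN : ∀ i, ∫⁻ y, etot (N y i) ∂φ = 1) (n : ℕ) :
    (KK N φ)^[n] (fun p => etot p.2) = fun p => etot p.2 := by
  induction n with
  | zero => rfl
  | succ n ih =>
    rw [Function.iterate_succ_apply', ih]; funext p; exact lintegral_etot hNm hN _

omit [Countable E] in
lemma KKn_scale (c d : ℝ≥0∞) (G : (E → ℝ≥0∞) × (E → ℝ≥0∞) → ℝ≥0∞) (n : ℕ)
    (a b : E → ℝ≥0∞) :
    (KK N φ)^[n] G (c • a, d • b) = (KK N φ)^[n] (fun q => G (c • q.1, d • q.2)) (a, b) := by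
  induction n generalizing a b with
  | zero => rfl
  | succ n ih =>
    simp only [Function.iterate_succ_apply', KK, pact, eact_smul, ih]

/-! sublinearity -/

def JSub (G : (E → ℝ≥0∞) × (E → ℝ≥0∞) → ℝ≥0∞) : Prop :=
  ∀ (w : E → ℝ≥0∞) (as bs : E → E → ℝ≥0∞),
    G (fun j => ∑' i, w i * as i j, fun j => ∑' i, w i * bs i j) ≤ ∑' i, w i * G (as i, bs i)

def SubL (G : (E → ℝ≥0∞) × (E → ℝ≥0∞) → ℝ≥0∞) : Prop :=
  ∀ (w : E → ℝ≥0∞) (as : E → E → ℝ≥0∞) (b : E → ℝ≥0∞),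
    G (fun j => ∑' i, w i * as i j, b) ≤ ∑' i, w i * G (as i, b)

def LinL (G : (E → ℝ≥0∞) × (E → ℝ≥0∞) → ℝ≥0∞) : Prop :=
  ∀ (w : E → ℝ≥0∞) (as : E → E → ℝ≥0∞) (b : E → ℝ≥0∞),
    G (fun j => ∑' i, w i * as i j, b) = ∑' i, w i * G (as i, b)

lemma lintegral_wsum (hNm : ∀ i j, Measurable fun y => N y i j)
    {G : (E → ℝ≥0∞) × (E → ℝ≥0∞) → ℝ≥0∞} (hm : Measurable G) (w : E → ℝ≥0∞)
    (ps : E → (E → ℝ≥0∞) × (E → ℝ≥0∞)) :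
    ∫⁻ y, ∑' i, w i * G (pact N (ps i) y) ∂φ = ∑' i, w i * KK N φ G (ps i) := by
  have h : ∀ i, Measurable fun y => G (pact N (ps i) y) := fun i =>
    hm.comp (measurable_pact_right hNm _)
  rw [lintegral_tsum fun i => ((h i).const_mul _).aemeasurable]
  simp only [lintegral_const_mul _ (h _)]
  rfl

lemma JSub.KK (hNm : ∀ i j, Measurable fun y => N y i j)
    {G : (E → ℝ≥0∞) × (E → ℝ≥0∞) → ℝ≥0∞} (hm : Measurable G) (hG : JSub G) :
    JSub (KK N φ G) := by
  intro w as bs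
  rw [← lintegral_wsum hNm hm w (fun i => (as i, bs i))]
  refine lintegral_mono fun y => ?_
  simp only [pact, eact_tsum]
  exact hG _ _ _

lemma SubL.KK (hNm : ∀ i j, Measurable fun y => N y i j)
    {G : (E → ℝ≥0∞) × (E → ℝ≥0∞) → ℝ≥0∞} (hm : Measurable G) (hG : SubL G) :
    SubL (KK N φ G) := by
  intro w as b
  rw [← lintegral_wsum hNm hm w (fun i => (as i, b))]
  refine lintegral_mono fun y => ?_
  simp only [pact, eact_tsum]
  exact hG _ _ _

lemma LinL.KK (hNm : ∀ i j, Measurable fun y => N y i j)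
    {G : (E → ℝ≥0∞) × (E → ℝ≥0∞) → ℝ≥0∞} (hm : Measurable G) (hG : LinL G) :
    LinL (KK N φ G) := by
  intro w as b
  rw [← lintegral_wsum hNm hm w (fun i => (as i, b))]
  refine lintegral_congr fun y => ?_
  simp only [pact, eact_tsum]
  exact hG _ _ _

lemma JSub.KKn [SigmaFinite φ] (hNm : ∀ i j, Measurable fun y => N y i j)
    {G : (E → ℝ≥0∞) × (E → ℝ≥0∞) → ℝ≥0∞} (hm : Measurable G) (hG : JSub G) (n : ℕ) :
    JSub ((_root_.KK N φ)^[n] G) := by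
  induction n with
  | zero => exact hG
  | succ n ih => rw [Function.iterate_succ_apply']; exact ih.KK hNm (measurable_KKn hNm hm n)

lemma SubL.KKn [SigmaFinite φ] (hNm : ∀ i j, Measurable fun y => N y i j)
    {G : (E → ℝ≥0∞) × (E → ℝ≥0∞) → ℝ≥0∞} (hm : Measurable G) (hG : SubL G) (n : ℕ) :
    SubL ((_root_.KK N φ)^[n] G) := by
  induction n with
  | zero => exact hG
  | succ n ih => rw [Function.iterate_succ_apply']; exact ih.KK hNm (measurable_KKn hNm hm n)

lemma LinL.KKn [SigmaFinite φ] (hNm : ∀ i j, Measurable fun y => N y i j)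
    {G : (E → ℝ≥0∞) × (E → ℝ≥0∞) → ℝ≥0∞} (hm : Measurable G) (hG : LinL G) (n : ℕ) :
    LinL ((_root_.KK N φ)^[n] G) := by
  induction n with
  | zero => exact hG
  | succ n ih => rw [Function.iterate_succ_apply']; exact ih.KK hNm (measurable_KKn hNm hm n)

end Abstract
set_option linter.all false
open MeasureTheory Filter Topology ENNReal

section Part2
variable {E F : Type*} [Countable E] [MeasurableSpace F] {N : F → E → E → ℝ≥0∞} {φ : Measure F}

/-- base difference -/
noncomputable def tdiff (p : (E → ℝ≥0∞) × (E → ℝ≥0∞)) : ℝ≥0∞ := etot p.1 - etot p.2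

noncomputable def resc (p : (E → ℝ≥0∞) × (E → ℝ≥0∞)) : (E → ℝ≥0∞) × (E → ℝ≥0∞) :=
  (p.1, (etot p.1 / etot p.2) • p.2)

noncomputable def Hm (N : F → E → E → ℝ≥0∞) (φ : Measure F) (m : ℕ)
    (p : (E → ℝ≥0∞) × (E → ℝ≥0∞)) : ℝ≥0∞ := (KK N φ)^[m] tdiff (resc p)

noncomputable def HH (N : F → E → E → ℝ≥0∞) (φ : Measure F)
    (p : (E → ℝ≥0∞) × (E → ℝ≥0∞)) : ℝ≥0∞ := ⨆ m, Hm N φ m p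

lemma measurable_etot1 : Measurable fun p : (E → ℝ≥0∞) × (E → ℝ≥0∞) => etot p.1 :=
  measurable_etot.comp measurable_fst

lemma measurable_etot2 : Measurable fun p : (E → ℝ≥0∞) × (E → ℝ≥0∞) => etot p.2 :=
  measurable_etot.comp measurable_snd

lemma measurable_tdiff : Measurable (tdiff : (E → ℝ≥0∞) × (E → ℝ≥0∞) → ℝ≥0∞) :=
  measurable_etot1.sub measurable_etot2

lemma measurable_resc : Measurable (resc : (E → ℝ≥0∞) × (E → ℝ≥0∞) → _) := by
  unfold resc
  refine measurable_fst.prodMk (measurable_pi_lambda _ fun j => ?_)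
  exact (measurable_etot1.div measurable_etot2).mul ((measurable_pi_apply j).comp measurable_snd)

lemma measurable_Hm [SigmaFinite φ] (hNm : ∀ i j, Measurable fun y => N y i j) (m : ℕ) :
    Measurable (Hm N φ m) := (measurable_KKn hNm measurable_tdiff m).comp measurable_resc

lemma measurable_HH [SigmaFinite φ] (hNm : ∀ i j, Measurable fun y => N y i j) :
    Measurable (HH N φ) := Measurable.iSup fun m => measurable_Hm hNm m

lemma tdiff_le_KK (hNm : ∀ i j, Measurable fun y => N y i j)
    (hN : ∀ i, ∫⁻ y, etot (N y i) ∂φ = 1) :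
    (tdiff : (E → ℝ≥0∞) × (E → ℝ≥0∞) → ℝ≥0∞) ≤ KK N φ tdiff := by
  intro p
  have := lintegral_sub_le (μ := φ) (fun y => etot (eact N p.2 y)) (fun y => etot (eact N p.1 y))
    (measurable_etot.comp (measurable_eact_right hNm p.2))
  rwa [lintegral_etot hNm hN, lintegral_etot hNm hN] at this

lemma KKn_tdiff_mono (hNm : ∀ i j, Measurable fun y => N y i j)
    (hN : ∀ i, ∫⁻ y, etot (N y i) ∂φ = 1) :
    Monotone fun m => (KK N φ)^[m] (tdiff : (E → ℝ≥0∞) × (E → ℝ≥0∞) → ℝ≥0∞) := by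
  refine monotone_nat_of_le_succ fun m => ?_
  rw [Function.iterate_succ_apply]
  exact KKn_mono (tdiff_le_KK hNm hN) m

lemma Hm_mono (hNm : ∀ i j, Measurable fun y => N y i j)
    (hN : ∀ i, ∫⁻ y, etot (N y i) ∂φ = 1) : Monotone (Hm N φ) := fun m m' h p =>
  KKn_tdiff_mono hNm hN h (resc p)

lemma HH_le (hNm : ∀ i j, Measurable fun y => N y i j)
    (hN : ∀ i, ∫⁻ y, etot (N y i) ∂φ = 1) (p : (E → ℝ≥0∞) × (E → ℝ≥0∞)) :
    HH N φ p ≤ etot p.1 := by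
  refine iSup_le fun m => ?_
  have : (KK N φ)^[m] tdiff (resc p) ≤ (KK N φ)^[m] (fun p => etot p.1) (resc p) :=
    KKn_mono (fun p => tsub_le_self) m _
  rwa [KKn_etot1 hNm hN] at this

lemma JSub_tdiff : JSub (tdiff : (E → ℝ≥0∞) × (E → ℝ≥0∞) → ℝ≥0∞) := by
  intro w as bs
  simp only [tdiff, etot_tsum, tsub_le_iff_right, ← ENNReal.tsum_add]
  refine ENNReal.tsum_le_tsum fun i => ?_
  rw [← mul_add]
  gcongr
  exact le_tsub_add

lemma SubL_Hm [SigmaFinite φ] (hNm : ∀ i j, Measurable fun y => N y i j) (m : ℕ) :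
    SubL (Hm N φ m) := by
  intro w as b
  have := JSub_tdiff.KKn (φ := φ) hNm measurable_tdiff m w as
    (fun i => (etot (as i) / etot b) • b)
  convert this using 1
  unfold Hm resc
  have e : (etot (fun j => ∑' i, w i * as i j) / etot b) • b =
      fun j => ∑' i, w i * ((etot (as i) / etot b) • b) j := by
   funext j
   simp only [etot_tsum, Pi.smul_apply, smul_eq_mul, div_eq_mul_inv, ← ENNReal.tsum_mul_right,
    mul_assoc]
  · rw [← e]
  · rfl

lemma SubL_HH [SigmaFinite φ] (hNm : ∀ i j, Measurable fun y => N y i j) :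
    SubL (HH N φ) := by
  intro w as b
  refine iSup_le fun m => (SubL_Hm hNm m w as b).trans ?_
  refine ENNReal.tsum_le_tsum fun i => ?_
  gcongr
  exact le_iSup (fun m => Hm N φ m (as i, b)) m

noncomputable def VV (p : (E → ℝ≥0∞) × (E → ℝ≥0∞)) : ℝ≥0∞ := etot p.1 ^ 2 / etot p.2

lemma measurable_VV : Measurable (VV : (E → ℝ≥0∞) × (E → ℝ≥0∞) → ℝ≥0∞) :=
  (measurable_etot1.pow_const 2).div measurable_etot2

lemma ptwise (s t c η : ℝ≥0∞) (hst : s ≤ t) (ht : t < ∞) (hc : c < ∞) (hη : η < ∞) :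
    η * (s - c * t) + 2 * c * s ≤ η ^ 2 * t + s ^ 2 / t + c ^ 2 * t := by
  rcases eq_or_ne t 0 with rfl | h0
  · have : s = 0 := by simpa using hst
    simp [this]
  lift t to NNReal using ht.ne
  lift s to NNReal using (hst.trans_lt ht).ne
  lift c to NNReal using hc.ne
  lift η to NNReal using hη.ne
  have h0' : t ≠ 0 := by simpa using h0
  rw [← ENNReal.coe_pow s, ← ENNReal.coe_div h0']
  norm_cast
  rcases le_total s (c * t) with h | h
  · rw [tsub_eq_zero_of_le h]
    rw [← NNReal.coe_le_coe]
    push_cast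
    have ht : (0:ℝ) < t := by positivity
    have : (s:ℝ)^2 / t + c^2 * t - 2 * c * s = (s - c * t)^2 / t := by field_simp; ring
    have h2 : (0:ℝ) ≤ (s - c * t)^2 / t := by positivity
    have h3 : (0:ℝ) ≤ η^2 * t := by positivity
    linarith
  · rw [← NNReal.coe_le_coe]
    push_cast [NNReal.coe_sub h]
    have ht : (0:ℝ) < t := by positivity
    have : η^2 * t + (s:ℝ)^2 / t + c^2 * t - 2 * c * s - η * (s - c * t)
      = ((s - c * t - η * t / 2)^2 + 3/4 * (η*t)^2) / t := by field_simp; ring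
    have h2 : (0:ℝ) ≤ ((s - c * t - η * t / 2)^2 + 3/4 * (η*t)^2) / t := by positivity
    linarith

lemma Hm_ineq [SigmaFinite φ] (hNm : ∀ i j, Measurable fun y => N y i j)
    (hN : ∀ i, ∫⁻ y, etot (N y i) ∂φ = 1) (η : ℝ≥0∞) (hη : η < ∞) (m : ℕ)
    (p : (E → ℝ≥0∞) × (E → ℝ≥0∞)) (hp : p.1 ≤ p.2 ∧ etot p.2 < ∞) :
    η * Hm N φ m p + VV p ≤ η ^ 2 * etot p.2 + (KK N φ)^[m] VV p := by
  obtain ⟨a, b⟩ := p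
  obtain ⟨h1, h2⟩ := hp
  simp only at h1 h2
  have hab := etot_mono h1
  rcases eq_or_ne (etot b) 0 with hb0 | hb0
  · have ha0 : etot a = 0 := by simpa [hb0] using hab
    have : Hm N φ m (a, b) = 0 := by
      have := (le_iSup (fun m => Hm N φ m (a, b)) m).trans (HH_le hNm hN (a,b))
      simpa [ha0] using this
    simp [this, VV, ha0, hb0]
  set c := etot a / etot b with hc
  have hcfin : c < ∞ := ENNReal.div_lt_top (hab.trans_lt h2).ne hb0
  have hH : Hm N φ m (a, b) =
      (KK N φ)^[m] (fun q => etot q.1 - c * etot q.2) (a, b) := by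
    have := KKn_scale (N := N) (φ := φ) 1 c tdiff m a b
    simp only [one_smul] at this
    unfold Hm resc
    rw [← hc, this]
    simp only [tdiff, etot_smul]
  have hmd : Measurable fun q : (E → ℝ≥0∞) × (E → ℝ≥0∞) => etot q.1 - c * etot q.2 :=
    measurable_etot1.sub (measurable_etot2.const_mul c)
  have key := KKn_mono_on (aeinv_dom hNm hN)
    (G := η • (fun q => etot q.1 - c * etot q.2) + (2 * c) • (fun q => etot q.1))
    (G' := (η ^ 2) • (fun q => etot q.2) + VV + (c ^ 2) • (fun q => etot q.2))
    (fun q hq => ptwise (etot q.1) (etot q.2) c η (etot_mono hq.1) hq.2 hcfin hη) m (a, b)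
    ⟨h1, h2⟩
  rw [KKn_add hNm (hmd.const_smul η), KKn_add hNm ((measurable_etot2.const_smul (η ^ 2)).add
    measurable_VV), KKn_add hNm (measurable_etot2.const_smul (η ^ 2)), KKn_smul hNm hmd,
    KKn_smul hNm measurable_etot1, KKn_smul hNm measurable_etot2, KKn_smul hNm measurable_etot2,
    KKn_etot1 hNm hN, KKn_etot2 hNm hN] at key
  simp only [Pi.add_apply, Pi.smul_apply, smul_eq_mul] at key
  rw [← hH] at key
  have hct : c * etot b = etot a := ENNReal.div_mul_cancel hb0 h2.ne
  have hV : VV (a, b) = c * etot a := by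
    simp only [VV, hc, sq, div_eq_mul_inv]; ring
  have e1 : c ^ 2 * etot b = VV (a, b) := by rw [hV, ← hct]; ring
  have e2 : 2 * c * etot a = VV (a, b) + VV (a, b) := by rw [hV]; ring
  have hVf : VV (a, b) ≠ ∞ := by
    rw [hV]; exact (ENNReal.mul_lt_top hcfin (hab.trans_lt h2)).ne
  rw [e1, e2, ← add_assoc] at key
  exact (ENNReal.add_le_add_iff_right hVf).1 key

lemma tendsto_HH_dom [SigmaFinite φ] (hNm : ∀ i j, Measurable fun y => N y i j)
    (hN : ∀ i, ∫⁻ y, etot (N y i) ∂φ = 1)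
    (p : (E → ℝ≥0∞) × (E → ℝ≥0∞)) (hp : p.1 ≤ p.2 ∧ etot p.2 = 1) :
    Tendsto (fun n => (KK N φ)^[n] (HH N φ) p) atTop (𝓝 0) := by
  have hpS : p ∈ {p : (E → ℝ≥0∞) × (E → ℝ≥0∞) | p.1 ≤ p.2 ∧ etot p.2 < ∞} :=
    ⟨hp.1, by rw [hp.2]; exact one_lt_top⟩
  set A : ℕ → ℝ≥0∞ := fun n => (KK N φ)^[n] VV p with hA
  have hA1 : ∀ n, A n ≤ 1 := by
    intro n
    have := KKn_mono_on (aeinv_dom hNm hN) (G := VV) (G' := fun q => etot q.2)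
      (fun q hq => by
        have h1 := etot_mono hq.1
        have : VV q ≤ etot q.2 ^ 2 / etot q.2 := by unfold VV; gcongr
        refine this.trans ?_
        rw [sq, div_eq_mul_inv, mul_assoc]
        calc _ ≤ etot q.2 * 1 := by gcongr; exact ENNReal.mul_inv_le_one _
          _ = _ := mul_one _) n p hpS
    rw [KKn_etot2 hNm hN] at this
    exact this.trans_eq hp.2
  have main : ∀ η : ℝ≥0∞, η < ∞ → ∀ n m,
      η * (KK N φ)^[n] (Hm N φ m) p + A n ≤ η ^ 2 + A (n + m) := by
    intro η hη n m
    have := KKn_mono_on (aeinv_dom hNm hN) (G := η • Hm N φ m + VV)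
      (G' := η ^ 2 • (fun q => etot q.2) + (KK N φ)^[m] VV)
      (fun q hq => Hm_ineq hNm hN η hη m q hq) n p hpS
    rw [KKn_add hNm ((measurable_Hm hNm m).const_smul η),
      KKn_add hNm (measurable_etot2.const_smul _), KKn_smul hNm (measurable_Hm hNm m),
      KKn_smul hNm measurable_etot2, KKn_etot2 hNm hN, ← Function.iterate_add_apply] at this
    simpa [hp.2] using this
  have hAmono : Monotone A := by
    refine monotone_nat_of_le_succ fun n => ?_
    simpa using main 0 (by simp) n 1
  have hsup : ∀ n, (KK N φ)^[n] (HH N φ) p = ⨆ m, (KK N φ)^[n] (Hm N φ m) p := by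
    intro n
    exact congrFun (KKn_iSup hNm (measurable_Hm hNm) (Hm_mono hNm hN) n) p
  have main2 : ∀ η : ℝ≥0∞, η < ∞ → ∀ n,
      η * (KK N φ)^[n] (HH N φ) p + A n ≤ η ^ 2 + ⨆ k, A k := by
    intro η hη n
    rw [hsup, ENNReal.mul_iSup, ENNReal.iSup_add]
    refine iSup_le fun m => (main η hη n m).trans ?_
    gcongr
    exact le_iSup A (n + m)
  have hlim := tendsto_atTop_iSup hAmono
  have hs1 : (⨆ k, A k) ≤ 1 := iSup_le hA1
  rw [ENNReal.tendsto_nhds_zero]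
  intro ε hε
  obtain ⟨η, hη0, hηε⟩ : ∃ η : NNReal, 0 < η ∧ 2 * (η : ℝ≥0∞) ≤ ε := by
    obtain ⟨r, hr0, hr⟩ := ENNReal.lt_iff_exists_nnreal_btwn.1 hε
    refine ⟨r / 2, by have : 0 < r := by exact_mod_cast hr0
                      positivity, ?_⟩
    refine le_trans (le_of_eq ?_) hr.le
    norm_cast
    exact mul_div_cancel₀ r two_ne_zero
  have hη2 : (0 : ℝ≥0∞) < (η : ℝ≥0∞) ^ 2 := by positivity
  have hev : ∀ᶠ n in atTop, (⨆ k, A k) ≤ A n + (η : ℝ≥0∞) ^ 2 := by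
    rcases eq_or_ne (⨆ k, A k) 0 with h0 | h0
    · simp [h0]
    · have : (⨆ k, A k) - (η : ℝ≥0∞) ^ 2 < ⨆ k, A k :=
        ENNReal.sub_lt_self (hs1.trans_lt one_lt_top).ne h0 hη2.ne'
      filter_upwards [hlim.eventually (lt_mem_nhds this)] with n hn
      exact tsub_le_iff_right.1 hn.le
  filter_upwards [hev] with n hn
  have h1 := (main2 η coe_lt_top n).trans (add_le_add_right hn _)
  have h2 : (η : ℝ≥0∞) * (KK N φ)^[n] (HH N φ) p ≤ η * (2 * η) := by
    have : (η : ℝ≥0∞) * (KK N φ)^[n] (HH N φ) p + A n ≤ η * (2 * η) + A n := by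
      refine h1.trans (le_of_eq ?_); ring
    exact (ENNReal.add_le_add_iff_right ((hA1 n).trans_lt one_lt_top).ne).1 this
  exact ((ENNReal.mul_le_mul_iff_right (by exact_mod_cast hη0.ne') coe_ne_top).1 h2).trans hηε

/-- unit vectors -/
noncomputable def eunit (i : E) : E → ℝ≥0∞ := by
  classical exact Pi.single i 1

omit [Countable E] in
lemma sum_eunit (a : E → ℝ≥0∞) : (fun j => ∑' i, a i * eunit i j) = a := by
  classical
  funext j
  rw [tsum_eq_single j]
  · simp [eunit]
  · intro i hi
    simp [eunit, Pi.single_apply, hi.symm]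

omit [Countable E] in
lemma etot_eunit (i : E) : etot (eunit i) = 1 := by
  classical
  unfold etot
  rw [tsum_eq_single i]
  · simp [eunit]
  · intro j hi
    simp [eunit, Pi.single_apply, hi]

omit [Countable E] in
lemma SubL.scale {G : (E → ℝ≥0∞) × (E → ℝ≥0∞) → ℝ≥0∞} (hG : SubL G) (w : ℝ≥0∞) (hw : w ≠ 0)
    (hw' : w ≠ ∞) (a b : E → ℝ≥0∞) : w * G (a, b) ≤ G (w • a, b) := by
  classical
  by_cases hE : Nonempty E
  · obtain ⟨e⟩ := hE
    have := hG (Pi.single e w⁻¹) (fun _ => w • a) b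
    have e1 : (fun j => ∑' i, (Pi.single e w⁻¹ : E → ℝ≥0∞) i * (w • a) j) = a := by
      funext j
      rw [tsum_eq_single e]
      · simp [← mul_assoc, ENNReal.inv_mul_cancel hw hw']
      · intro i hi; simp [hi]
    have e2 : (∑' i, (Pi.single e w⁻¹ : E → ℝ≥0∞) i * G (w • a, b)) = w⁻¹ * G (w • a, b) := by
      rw [tsum_eq_single e]
      · simp
      · intro i hi; simp [hi]
    rw [e1, e2] at this
    calc w * G (a, b) ≤ w * (w⁻¹ * G (w • a, b)) := by gcongr
      _ = _ := by rw [← mul_assoc, ENNReal.mul_inv_cancel hw hw', one_mul]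
  · have : IsEmpty E := not_nonempty_iff.1 hE
    have h0 := hG 0 (fun _ => a) b
    have : (fun j => ∑' i, (0 : E → ℝ≥0∞) i * a j) = a := Subsingleton.elim _ _
    rw [this] at h0
    simp at h0
    simp [h0]

lemma tendsto_sum_HH [SigmaFinite φ] (hNm : ∀ i j, Measurable fun y => N y i j)
    (hN : ∀ i, ∫⁻ y, etot (N y i) ∂φ = 1) (l : E → ℝ≥0∞) (hl : etot l = 1) :
    Tendsto (fun n => ∑' i, l i * (KK N φ)^[n] (HH N φ) (eunit i, l)) atTop (𝓝 0) := by
  letI : MeasurableSpace E := ⊤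
  have hle1 : ∀ i, l i ≤ 1 := fun i => hl ▸ ENNReal.le_tsum i
  have hbd : ∀ n i, l i * (KK N φ)^[n] (HH N φ) (eunit i, l) ≤ l i := by
    intro n i
    have : (KK N φ)^[n] (HH N φ) (eunit i, l) ≤ 1 := by
      have := KKn_mono (N := N) (φ := φ) (HH_le hNm hN) n (eunit i, l)
      rw [KKn_etot1 hNm hN] at this
      simpa [etot_eunit] using this
    calc _ ≤ l i * 1 := by gcongr
      _ = _ := mul_one _
  have hlim : ∀ i, Tendsto (fun n => l i * (KK N φ)^[n] (HH N φ) (eunit i, l)) atTop (𝓝 0) := by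
    intro i
    rcases eq_or_ne (l i) 0 with h0 | h0
    · simp [h0]
    have hdom : (l i • eunit i : E → ℝ≥0∞) ≤ l := by
      classical
      intro j
      by_cases h : j = i
      · subst h; simp [eunit]
      · simp [eunit, h]
    refine tendsto_of_tendsto_of_tendsto_of_le_of_le tendsto_const_nhds
      (tendsto_HH_dom hNm hN (l i • eunit i, l) ⟨hdom, hl⟩) (fun n => zero_le) fun n => ?_
    exact ((SubL_HH hNm).KKn hNm (measurable_HH hNm) n).scale (l i) h0
      ((hle1 i).trans_lt one_lt_top).ne _ _
  have := tendsto_lintegral_of_dominated_convergence (μ := Measure.count) (bound := l)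
    (F := fun n i => l i * (KK N φ)^[n] (HH N φ) (eunit i, l)) (f := fun _ => 0)
    (fun n => measurable_from_top) (fun n => Eventually.of_forall (hbd n))
    (by rw [lintegral_count]; change etot l ≠ ∞; simp [hl])
    (Eventually.of_forall hlim)
  simpa [lintegral_count] using this

end Part2
set_option linter.all false
open MeasureTheory Filter Topology ENNReal

section Part3
variable {E F : Type*}

/-- embedding of probability vectors -/
noncomputable def emb (α : ProbVec E) : E → ℝ≥0∞ := fun i => ENNReal.ofReal (α.1 i)

lemma etot_emb (α : ProbVec E) : etot (emb α) = 1 := by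
  unfold etot emb
  rw [← ENNReal.ofReal_tsum_of_nonneg α.2.1 α.2.2.summable, α.2.2.tsum_eq, ENNReal.ofReal_one]

lemma emb_toReal (α : ProbVec E) (i : E) : (emb α i).toReal = α.1 i :=
  ENNReal.toReal_ofReal (α.2.1 i)

lemma emb_inj {α β : ProbVec E} (h : emb α = emb β) : α = β := by
  apply Subtype.ext; funext i; rw [← emb_toReal, h, emb_toReal]

lemma enorm_aux (a : E → ℝ≥0∞) (h : etot a ≠ 0 ∧ etot a ≠ ∞) :
    (∀ i, 0 ≤ (fun i => (a i / etot a).toReal) i) ∧ HasSum (fun i => (a i / etot a).toReal) 1 := by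
  refine ⟨fun i => toReal_nonneg, ?_⟩
  have hs : ∑' i, a i / etot a = 1 := by
    simp only [div_eq_mul_inv, ENNReal.tsum_mul_right]
    exact ENNReal.mul_inv_cancel h.1 h.2
  have := ENNReal.hasSum_toReal (f := fun i => a i / etot a) (by rw [hs]; simp)
  rw [← ENNReal.tsum_toReal_eq] at this
  · rwa [hs, ENNReal.toReal_one] at this
  · intro i
    exact ((ENNReal.le_tsum i).trans_lt (hs.trans_lt one_lt_top)).ne

open Classical in
/-- normalization -/
noncomputable def enormz (d : ProbVec E) (a : E → ℝ≥0∞) : ProbVec E :=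
  if h : etot a ≠ 0 ∧ etot a ≠ ∞ then ⟨fun i => (a i / etot a).toReal, enorm_aux a h⟩ else d

lemma emb_enormz (d : ProbVec E) {a : E → ℝ≥0∞} (h : etot a ≠ 0) (h' : etot a ≠ ∞) :
    emb (enormz d a) = (etot a)⁻¹ • a := by
  funext i
  have : (enormz d a).1 i = (a i / etot a).toReal := by
    unfold enormz; rw [dif_pos ⟨h, h'⟩]
  unfold emb
  rw [this, ENNReal.ofReal_toReal]
  · simp [div_eq_mul_inv, mul_comm]
  · exact (ENNReal.div_lt_top ((ENNReal.le_tsum i).trans_lt h'.lt_top).ne h).ne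

lemma emb_enormz_mul (d : ProbVec E) {a : E → ℝ≥0∞} (h' : etot a ≠ ∞) (i : E):
    emb (enormz d a) i * etot a = a i := by
  by_cases h : etot a = 0
  · rw [h, mul_zero]
    exact ((ENNReal.tsum_eq_zero.1 h) i).symm
  · rw [emb_enormz d h h']
    simp only [Pi.smul_apply, smul_eq_mul]
    rw [mul_right_comm, ENNReal.inv_mul_cancel h h', one_mul]

lemma enormz_emb (d α : ProbVec E) : enormz d (emb α) = α := by
  apply emb_inj
  rw [emb_enormz] <;> simp [etot_emb]

lemma enormz_smul (d : ProbVec E) {a : E → ℝ≥0∞} {c : ℝ≥0∞} (hc : c ≠ 0) (hc' : c ≠ ∞)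
    (h : etot a ≠ 0) (h' : etot a ≠ ∞) : enormz d (c • a) = enormz d a := by
  apply emb_inj
  rw [emb_enormz d h h', emb_enormz, etot_smul]
  · rw [ENNReal.mul_inv (Or.inl hc) (Or.inl hc'), smul_smul, mul_right_comm,
      ENNReal.inv_mul_cancel hc hc', one_mul]
  · rw [etot_smul]; simp [hc, h]
  · rw [etot_smul]; exact ENNReal.mul_ne_top hc' h'

/-- ell one distance -/
noncomputable def ed (α β : ProbVec E) : ℝ≥0∞ := ∑' i, ENNReal.ofReal |α.1 i - β.1 i|

lemma summable_sub (α β : ProbVec E) : Summable fun i => |α.1 i - β.1 i| :=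
  (α.2.2.summable.sub β.2.2.summable).abs

lemma ed_eq (α β : ProbVec E) : ed α β = ENNReal.ofReal (tvDist α β) := by
  unfold ed tvDist
  rw [ENNReal.ofReal_tsum_of_nonneg (fun _ => abs_nonneg _) (summable_sub α β)]

lemma ed_le_two (α β : ProbVec E) : ed α β ≤ 2 := by
  have h1 : ed α β ≤ etot (emb α) + etot (emb β) := by
    unfold ed etot emb
    rw [← ENNReal.tsum_add]
    refine ENNReal.tsum_le_tsum fun i => ?_
    rw [← ENNReal.ofReal_add (α.2.1 i) (β.2.1 i)]
    apply ENNReal.ofReal_le_ofReal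
    have := α.2.1 i
    have := β.2.1 i
    rw [abs_le]; constructor <;> linarith
  rw [etot_emb, etot_emb] at h1
  exact h1.trans (by norm_num)

lemma ed_comm (α β : ProbVec E) : ed α β = ed β α := by
  unfold ed; simp only [abs_sub_comm]

lemma ed_self (α : ProbVec E) : ed α α = 0 := by simp [ed]

lemma ed_triangle (α β γ : ProbVec E) : ed α γ ≤ ed α β + ed β γ := by
  unfold ed
  rw [← ENNReal.tsum_add]
  refine ENNReal.tsum_le_tsum fun i => ?_
  rw [← ENNReal.ofReal_add (abs_nonneg _) (abs_nonneg _)]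
  exact ENNReal.ofReal_le_ofReal (abs_sub_le _ _ _)

lemma ed_eq' (α β : ProbVec E) :
    ed α β = ∑' i, ((emb α i - emb β i) + (emb β i - emb α i)) := by
  unfold ed
  refine tsum_congr fun i => ?_
  unfold emb
  rw [← ENNReal.ofReal_sub _ (β.2.1 i), ← ENNReal.ofReal_sub _ (α.2.1 i)]
  rcases le_total (α.1 i) (β.1 i) with h | h
  · rw [abs_of_nonpos (by linarith), ENNReal.ofReal_of_nonpos (sub_nonpos.2 h), zero_add, neg_sub]
  · rw [abs_of_nonneg (by linarith), ENNReal.ofReal_of_nonpos (p := β.1 i - α.1 i)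
      (sub_nonpos.2 h), add_zero]

variable [Countable E]

lemma measurable_emb : Measurable (emb : ProbVec E → E → ℝ≥0∞) :=
  measurable_pi_lambda _ fun i =>
    ENNReal.measurable_ofReal.comp ((measurable_pi_apply i).comp measurable_subtype_coe)

lemma measurable_enormz (d : ProbVec E) : Measurable (enormz d) := by
  classical
  have hS : MeasurableSet {a : E → ℝ≥0∞ | etot a ≠ 0 ∧ etot a ≠ ∞} :=
    (measurable_etot (measurableSet_singleton 0).compl).inter
      (measurable_etot (measurableSet_singleton ∞).compl)
  refine measurable_of_restrict_of_restrict_compl hS ?_ ?_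
  · have : Set.domRestrict {a : E → ℝ≥0∞ | etot a ≠ 0 ∧ etot a ≠ ∞} (enormz d) =
      fun a => (⟨fun i => (a.1 i / etot a.1).toReal, enorm_aux a.1 a.2⟩ : ProbVec E) := by
      funext a
      simp only [Set.domRestrict_apply, enormz]
      exact dif_pos a.2
    rw [this]
    refine Measurable.subtype_mk (measurable_pi_lambda _ fun i => ?_)
    exact ((((measurable_pi_apply i).comp measurable_subtype_coe)).div
      (measurable_etot.comp measurable_subtype_coe)).ennreal_toReal
  · have : Set.domRestrict {a : E → ℝ≥0∞ | etot a ≠ 0 ∧ etot a ≠ ∞}ᶜ (enormz d) = fun _ => d := by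
      funext a
      simp only [Set.domRestrict_apply, enormz]
      exact dif_neg a.2
    rw [this]
    exact measurable_const

/-- Lifted functions. -/
noncomputable def Lf (d : ProbVec E) (f : ProbVec E → ℝ≥0∞)
    (p : (E → ℝ≥0∞) × (E → ℝ≥0∞)) : ℝ≥0∞ := f (enormz d p.1) * etot p.1

noncomputable def Gf (d : ProbVec E) (f : ProbVec E → ℝ≥0∞)
    (p : (E → ℝ≥0∞) × (E → ℝ≥0∞)) : ℝ≥0∞ := f (enormz d p.2) * etot p.1

lemma measurable_Lf (d : ProbVec E) {f : ProbVec E → ℝ≥0∞} (hf : Measurable f) :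
    Measurable (Lf d f) :=
  (hf.comp ((measurable_enormz d).comp measurable_fst)).mul measurable_etot1

lemma measurable_Gf (d : ProbVec E) {f : ProbVec E → ℝ≥0∞} (hf : Measurable f) :
    Measurable (Gf d f) :=
  (hf.comp ((measurable_enormz d).comp measurable_snd)).mul measurable_etot1

omit [Countable E] in
lemma LinL_Gf (d : ProbVec E) (f : ProbVec E → ℝ≥0∞) : LinL (Gf d f) := by
  intro w as b
  simp only [Gf, etot_tsum, ← ENNReal.tsum_mul_left]
  exact tsum_congr fun i => by ring

variable [MeasurableSpace F] {N : F → E → E → ℝ≥0∞} {φ : Measure F}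

noncomputable def kapM (N : F → E → E → ℝ≥0∞) (φ : Measure F) (d : ProbVec E) (α : ProbVec E) :
    Measure (ProbVec E) :=
  (φ.withDensity fun y => etot (eact N (emb α) y)).map fun y => enormz d (eact N (emb α) y)

lemma lintegral_kapM (hNm : ∀ i j, Measurable fun y => N y i j) (d α : ProbVec E)
    {f : ProbVec E → ℝ≥0∞} (hf : Measurable f) (b : E → ℝ≥0∞) :
    ∫⁻ β, f β ∂(kapM N φ d α) = KK N φ (Lf d f) (emb α, b) := by
  have h1 := measurable_eact_right hNm (emb α)
  unfold kapM
  have h2 : Measurable fun y => enormz d (eact N (emb α) y) := (measurable_enormz d).comp h1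
  have h3 : Measurable fun y => etot (eact N (emb α) y) := measurable_etot.comp h1
  have h4 : Measurable fun y => f (enormz d (eact N (emb α) y)) := hf.comp h2
  rw [lintegral_map hf h2, lintegral_withDensity_eq_lintegral_mul _ h3 h4]
  unfold KK Lf pact
  refine lintegral_congr fun y => ?_
  simp [mul_comm]

lemma measurable_kapM [SigmaFinite φ] (hNm : ∀ i j, Measurable fun y => N y i j) (d : ProbVec E) :
    Measurable (kapM N φ d) := by
  refine Measure.measurable_of_measurable_coe _ fun s hs => ?_
  have : ∀ α, kapM N φ d α s = KK N φ (Lf d (s.indicator 1)) (emb α, 0) := by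
    intro α
    rw [← lintegral_kapM hNm d α (measurable_one.indicator hs) 0, lintegral_indicator_one hs]
  simp only [this]
  exact (measurable_KK hNm (measurable_Lf d (measurable_one.indicator hs))).comp
    (measurable_emb.prodMk measurable_const)

noncomputable def kap [SigmaFinite φ] (hNm : ∀ i j, Measurable fun y => N y i j) (d : ProbVec E) :
    ProbabilityTheory.Kernel (ProbVec E) (ProbVec E) := ⟨kapM N φ d, measurable_kapM hNm d⟩

lemma isMarkov_kap [SigmaFinite φ] (hNm : ∀ i j, Measurable fun y => N y i j)
    (hN : ∀ i, ∫⁻ y, etot (N y i) ∂φ = 1) (d : ProbVec E) :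
    ProbabilityTheory.IsMarkovKernel (kap (φ := φ) hNm d) := by
  refine ⟨fun α => ⟨?_⟩⟩
  change kapM N φ d α Set.univ = 1
  rw [← lintegral_one, lintegral_kapM hNm d α measurable_const 0]
  unfold KK Lf pact
  simp [lintegral_etot hNm hN, etot_emb]

noncomputable def Pie (N : F → E → E → ℝ≥0∞) (φ : Measure F) (d : ProbVec E)
    (f : ProbVec E → ℝ≥0∞) (α : ProbVec E) : ℝ≥0∞ := KK N φ (Lf d f) (emb α, 0)

lemma measurable_Pie [SigmaFinite φ] (hNm : ∀ i j, Measurable fun y => N y i j) (d : ProbVec E)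
    {f : ProbVec E → ℝ≥0∞} (hf : Measurable f) : Measurable (Pie N φ d f) :=
  (measurable_KK hNm (measurable_Lf d hf)).comp (measurable_emb.prodMk measurable_const)

lemma measurable_Pien [SigmaFinite φ] (hNm : ∀ i j, Measurable fun y => N y i j) (d : ProbVec E)
    {f : ProbVec E → ℝ≥0∞} (hf : Measurable f) (n : ℕ) : Measurable ((Pie N φ d)^[n] f) := by
  induction n with
  | zero => exact hf
  | succ n ih => rw [Function.iterate_succ_apply']; exact measurable_Pie hNm d ih

lemma lintegral_bind_kap [SigmaFinite φ] (hNm : ∀ i j, Measurable fun y => N y i j)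
    (d : ProbVec E) (μ : Measure (ProbVec E)) {f : ProbVec E → ℝ≥0∞} (hf : Measurable f) :
    ∫⁻ β, f β ∂(μ.bind (kap (φ := φ) hNm d)) = ∫⁻ α, Pie N φ d f α ∂μ := by
  rw [Measure.lintegral_bind (kap (φ := φ) hNm d).measurable.aemeasurable hf.aemeasurable]
  refine lintegral_congr fun α => ?_
  exact lintegral_kapM hNm d α hf 0

lemma KK_Lf (hNm : ∀ i j, Measurable fun y => N y i j) (hN : ∀ i, ∫⁻ y, etot (N y i) ∂φ = 1)
    (d : ProbVec E) (f : ProbVec E → ℝ≥0∞) (hf : Measurable f)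
    (p : (E → ℝ≥0∞) × (E → ℝ≥0∞)) (hp : etot p.1 < ∞) :
    KK N φ (Lf d f) p = Lf d (Pie N φ d f) p := by
  rcases eq_or_ne (etot p.1) 0 with h0 | h0
  · have : p.1 = 0 := funext fun i => (ENNReal.tsum_eq_zero.1 h0) i
    have h2 : ∀ y, eact N p.1 y = 0 := fun y => by
      funext j; simp [eact, this]
    have h3 : etot (0 : E → ℝ≥0∞) = 0 := by simp [etot]
    simp [KK, Lf, pact, h2, h3, h0]
  · unfold Pie
    change _ = KK N φ (Lf d f) (emb (enormz d p.1), 0) * etot p.1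
    rw [emb_enormz d h0 hp.ne]
    unfold KK
    rw [← lintegral_mul_const]
    swap
    · exact (measurable_Lf d hf).comp (measurable_pact_right hNm _)
    refine lintegral_congr_ae ?_
    filter_upwards [ae_etot_lt hNm hN hp] with y hy
    simp only [Lf, pact, eact_smul, etot_smul]
    have hc0 : (etot p.1)⁻¹ ≠ 0 := by simp [hp.ne]
    have hc1 : (etot p.1)⁻¹ ≠ ∞ := by simp [h0]
    rcases eq_or_ne (etot (eact N p.1 y)) 0 with hz | hz
    · simp [hz]
    rw [enormz_smul d hc0 hc1 hz hy.ne]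
    rw [mul_assoc, mul_right_comm, ENNReal.inv_mul_cancel h0 hp.ne, one_mul]

lemma KKn_Lf [SigmaFinite φ] (hNm : ∀ i j, Measurable fun y => N y i j)
    (hN : ∀ i, ∫⁻ y, etot (N y i) ∂φ = 1)
    (d : ProbVec E) (f : ProbVec E → ℝ≥0∞) (hf : Measurable f) (n : ℕ)
    (p : (E → ℝ≥0∞) × (E → ℝ≥0∞)) (hp : etot p.1 < ∞ ∧ etot p.2 < ∞) :
    (KK N φ)^[n] (Lf d f) p = Lf d ((Pie N φ d)^[n] f) p := by
  induction n generalizing f p with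
  | zero => rfl
  | succ n ih =>
    rw [Function.iterate_succ_apply, Function.iterate_succ_apply]
    rw [← ih _ (measurable_Pie hNm d hf) p hp]
    exact KKn_congr_on (aeinv_fin hNm hN) (fun q hq => KK_Lf hNm hN d f hf q hq.1) n p hp

lemma Pien_eq [SigmaFinite φ] (hNm : ∀ i j, Measurable fun y => N y i j)
    (hN : ∀ i, ∫⁻ y, etot (N y i) ∂φ = 1)
    (d : ProbVec E) (f : ProbVec E → ℝ≥0∞) (hf : Measurable f) (n : ℕ) (α β : ProbVec E) :
    (Pie N φ d)^[n] f α = (KK N φ)^[n] (Lf d f) (emb α, emb β) := by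
  rw [KKn_Lf hNm hN d f hf n _ ⟨by simp [etot_emb], by simp [etot_emb]⟩]
  simp [Lf, enormz_emb, etot_emb]

/-- bounded Lipschitz -/
def BLip (L : ℝ≥0∞) (f : ProbVec E → ℝ≥0∞) : Prop :=
  (∀ α, f α ≤ 1) ∧ ∀ α β, f α ≤ f β + L * ed α β

/-- merging -/
lemma merging [SigmaFinite φ] (hNm : ∀ i j, Measurable fun y => N y i j)
    (hN : ∀ i, ∫⁻ y, etot (N y i) ∂φ = 1) (d lam : ProbVec E)
    (hUO : ∀ ε : ℝ≥0∞, 0 < ε → ∃ C : ℝ≥0∞, C < ∞ ∧ ∀ p : (E → ℝ≥0∞) × (E → ℝ≥0∞),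
      (etot p.1 < ∞ ∧ etot p.2 < ∞) →
      ed (enormz d p.1) (enormz d p.2) * etot p.1 ≤ ε * etot p.1 + C * HH N φ p)
    {L : ℝ≥0∞} (hL : L < ∞) {f : ProbVec E → ℝ≥0∞} (hfm : Measurable f) (hf : BLip L f)
    {ε : ℝ≥0∞} (hε : 0 < ε) :
    ∀ᶠ n in atTop, ∀ μ : Measure (ProbVec E), IsProbabilityMeasure μ →
      (∀ i, ∫⁻ α, emb α i ∂μ = emb lam i) →
      ∫⁻ α, (Pie N φ d)^[n] f α ∂μ ≤ (Pie N φ d)^[n] f lam + ε ∧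
      (Pie N φ d)^[n] f lam ≤ ∫⁻ α, (Pie N φ d)^[n] f α ∂μ + ε := by
  obtain ⟨ε', hε', hLε⟩ : ∃ ε' : ℝ≥0∞, 0 < ε' ∧ L * ε' ≤ ε / 2 := by
    refine ⟨ε / 2 / (L + 1), ?_, ?_⟩
    · refine ENNReal.div_pos (ENNReal.half_pos hε.ne').ne' ?_
      exact (ENNReal.add_lt_top.2 ⟨hL, one_lt_top⟩).ne
    · rw [← mul_div_assoc]
      refine ENNReal.div_le_of_le_mul ?_
      rw [mul_comm]; gcongr; exact le_self_add
  obtain ⟨C, hC, hUO⟩ := hUO ε' hε'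
  have hts := tendsto_sum_HH hNm hN (emb lam) (etot_emb lam)
  have hts2 : Tendsto (fun n => (L * C) * ∑' i, emb lam i * (KK N φ)^[n] (HH N φ) (eunit i, emb lam))
      atTop (𝓝 0) := by
    have := ENNReal.Tendsto.const_mul (a := L * C) hts (Or.inr (ENNReal.mul_ne_top hL.ne hC.ne))
    simpa using this
  filter_upwards [ENNReal.tendsto_nhds_zero.1 hts2 (ε / 2) (ENNReal.half_pos hε.ne')] with n hn
  intro μ hμ hbar
  set B : (E → ℝ≥0∞) × (E → ℝ≥0∞) → ℝ≥0∞ :=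
    (L * ε') • (fun p => etot p.1) + (L * C) • HH N φ with hB
  have hme : Measurable fun α : ProbVec E => (emb α, emb lam) :=
    measurable_emb.prodMk measurable_const
  have hmi : ∀ i, Measurable fun α : ProbVec E => emb α i := fun i =>
    (measurable_pi_apply i).comp measurable_emb
  have hKB : ∀ p : (E → ℝ≥0∞) × (E → ℝ≥0∞), (KK N φ)^[n] B p =
      (L * ε') * etot p.1 + (L * C) * (KK N φ)^[n] (HH N φ) p := by
    intro p
    rw [hB, KKn_add hNm (measurable_etot1.const_smul _), KKn_smul hNm measurable_etot1,
      KKn_smul hNm (measurable_HH hNm), KKn_etot1 hNm hN]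
    simp
  have hBint : ∫⁻ α, (KK N φ)^[n] B (emb α, emb lam) ∂μ ≤ ε := by
    simp only [hKB, etot_emb, mul_one]
    have hK : Measurable fun α : ProbVec E => (KK N φ)^[n] (HH N φ) (emb α, emb lam) :=
      (measurable_KKn hNm (measurable_HH hNm) n).comp hme
    rw [lintegral_add_left measurable_const, lintegral_const, measure_univ, mul_one,
      lintegral_const_mul _ hK]
    have h1 : ∫⁻ α, (KK N φ)^[n] (HH N φ) (emb α, emb lam) ∂μ ≤
        ∑' i, emb lam i * (KK N φ)^[n] (HH N φ) (eunit i, emb lam) := by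
      calc _ ≤ ∫⁻ α, ∑' i, emb α i * (KK N φ)^[n] (HH N φ) (eunit i, emb lam) ∂μ := by
            refine lintegral_mono fun α => ?_
            have := (SubL_HH (φ := φ) hNm).KKn (φ := φ) hNm (measurable_HH hNm) n (emb α) eunit (emb lam)
            rwa [sum_eunit] at this
        _ = _ := by
            rw [lintegral_tsum fun i => ((hmi i).mul_const _).aemeasurable]
            simp only [lintegral_mul_const _ (hmi _), hbar]
    calc _ ≤ ε / 2 + ε / 2 := by
          refine add_le_add hLε (le_trans ?_ hn)
          gcongr
      _ = ε := ENNReal.add_halves ε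
  have hGint : ∫⁻ α, (KK N φ)^[n] (Gf d f) (emb α, emb lam) ∂μ = (Pie N φ d)^[n] f lam := by
    have hlin := (LinL_Gf d f).KKn (φ := φ) hNm (measurable_Gf d hfm) n
    rw [Pien_eq hNm hN d f hfm n lam lam]
    have e1 : (KK N φ)^[n] (Lf d f) (emb lam, emb lam) =
        (KK N φ)^[n] (Gf d f) (emb lam, emb lam) :=
      KKn_congr_on aeinv_diag (fun q hq => by
        have : q.1 = q.2 := hq
        simp [Lf, Gf, this]) n _ rfl
    rw [e1]
    have e2 : ∀ a : E → ℝ≥0∞, (KK N φ)^[n] (Gf d f) (a, emb lam) =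
        ∑' i, a i * (KK N φ)^[n] (Gf d f) (eunit i, emb lam) := by
      intro a
      have := hlin a eunit (emb lam)
      rwa [sum_eunit] at this
    rw [e2 (emb lam)]
    simp only [e2 (emb _)]
    rw [lintegral_tsum fun i => ((hmi i).mul_const _).aemeasurable]
    simp only [lintegral_mul_const _ (hmi _), hbar]
  have hmL := measurable_Lf d hfm
  have hmG := measurable_Gf d hfm
  have hmB : Measurable B := (measurable_etot1.const_smul _).add ((measurable_HH hNm).const_smul _)
  have hptB : ∀ p : (E → ℝ≥0∞) × (E → ℝ≥0∞), (etot p.1 < ∞ ∧ etot p.2 < ∞) →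
      L * ed (enormz d p.1) (enormz d p.2) * etot p.1 ≤ B p := by
    intro p hp
    rw [mul_assoc]
    calc _ ≤ L * (ε' * etot p.1 + C * HH N φ p) := by gcongr; exact hUO p hp
      _ = _ := by simp [hB]; ring
  have hpt1 : ∀ p : (E → ℝ≥0∞) × (E → ℝ≥0∞), (etot p.1 < ∞ ∧ etot p.2 < ∞) →
      Lf d f p ≤ (Gf d f + B) p := by
    intro p hp
    calc Lf d f p ≤ (f (enormz d p.2) + L * ed (enormz d p.1) (enormz d p.2)) * etot p.1 := by
          unfold Lf; gcongr; exact hf.2 _ _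
      _ = Gf d f p + L * ed (enormz d p.1) (enormz d p.2) * etot p.1 := by unfold Gf; ring
      _ ≤ _ := by rw [Pi.add_apply]; gcongr; exact hptB p hp
  have hpt2 : ∀ p : (E → ℝ≥0∞) × (E → ℝ≥0∞), (etot p.1 < ∞ ∧ etot p.2 < ∞) →
      Gf d f p ≤ (Lf d f + B) p := by
    intro p hp
    calc Gf d f p ≤ (f (enormz d p.1) + L * ed (enormz d p.1) (enormz d p.2)) * etot p.1 := by
          unfold Gf; gcongr; rw [ed_comm]; exact hf.2 _ _
      _ = Lf d f p + L * ed (enormz d p.1) (enormz d p.2) * etot p.1 := by unfold Lf; ring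
      _ ≤ _ := by rw [Pi.add_apply]; gcongr; exact hptB p hp
  have hfin : ∀ α : ProbVec E, etot (emb α, emb lam).1 < ∞ ∧ etot (emb α, emb lam).2 < ∞ :=
    fun α => ⟨by simp [etot_emb], by simp [etot_emb]⟩
  have hP : ∀ α, (Pie N φ d)^[n] f α = (KK N φ)^[n] (Lf d f) (emb α, emb lam) := fun α =>
    Pien_eq hNm hN d f hfm n α lam
  constructor
  · rw [← hGint]
    calc ∫⁻ α, (Pie N φ d)^[n] f α ∂μ
        ≤ ∫⁻ α, ((KK N φ)^[n] (Gf d f) (emb α, emb lam) + (KK N φ)^[n] B (emb α, emb lam)) ∂μ := by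
          refine lintegral_mono fun α => ?_
          rw [hP]
          have := KKn_mono_on (aeinv_fin hNm hN) hpt1 n (emb α, emb lam) (hfin α)
          rwa [KKn_add hNm hmG] at this
      _ ≤ _ := by
          have hK : Measurable fun α : ProbVec E => (KK N φ)^[n] (Gf d f) (emb α, emb lam) :=
            (measurable_KKn hNm hmG n).comp hme
          rw [lintegral_add_left hK]
          gcongr
  · rw [← hGint]
    calc ∫⁻ α, (KK N φ)^[n] (Gf d f) (emb α, emb lam) ∂μ
        ≤ ∫⁻ α, ((Pie N φ d)^[n] f α + (KK N φ)^[n] B (emb α, emb lam)) ∂μ := by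
          refine lintegral_mono fun α => ?_
          rw [hP]
          have := KKn_mono_on (aeinv_fin hNm hN) hpt2 n (emb α, emb lam) (hfin α)
          rwa [KKn_add hNm hmL] at this
      _ ≤ _ := by
          rw [lintegral_add_left (measurable_Pien hNm d hfm n)]
          gcongr

end Part3
set_option linter.all false
open MeasureTheory Filter Topology ENNReal

section Part4
variable {E F : Type*}

noncomputable def nM (M : F → E → E → ℝ) : F → E → E → ℝ≥0∞ := fun y i j => ENNReal.ofReal (M y i j)

def GoodY (M : F → E → E → ℝ) (y : F) : Prop :=
  ∃ C : ℝ, ∀ (i : E) (s : Finset E), ∑ j ∈ s, M y i j ≤ C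

/-- nonneg summable vector `p` representing `a` -/
def VRep (p : E → ℝ) (a : E → ℝ≥0∞) : Prop :=
  (∀ j, 0 ≤ p j) ∧ Summable p ∧ ∀ j, ENNReal.ofReal (p j) = a j

lemma VRep.etot {p : E → ℝ} {a : E → ℝ≥0∞} (h : VRep p a) :
    ENNReal.ofReal (rowTot p) = etot a := by
  unfold rowTot _root_.etot
  rw [ENNReal.ofReal_tsum_of_nonneg h.1 h.2.1]
  simp only [h.2.2]

lemma VRep.emb (α : ProbVec E) : VRep α.1 (emb α) := ⟨α.2.1, α.2.2.summable, fun _ => rfl⟩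

lemma VRep.mul {M : F → E → E → ℝ} (hMnn : ∀ y i j, 0 ≤ M y i j) {y : F} (hy : GoodY M y)
    {p : E → ℝ} {a : E → ℝ≥0∞} (h : VRep p a) : VRep (rowMul M p y) (eact (nM M) a y) := by
  obtain ⟨C, hC⟩ := hy
  have h1 : ∀ i, _root_.etot (nM M y i) ≤ ENNReal.ofReal C := by
    intro i
    unfold _root_.etot
    rw [ENNReal.tsum_eq_iSup_sum]
    refine iSup_le fun s => ?_
    unfold nM
    rw [← ENNReal.ofReal_sum_of_nonneg fun j _ => hMnn y i j]
    exact ENNReal.ofReal_le_ofReal (hC i s)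
  have h2 : _root_.etot (eact (nM M) a y) ≠ ∞ := by
    rw [etot_eact]
    refine ne_of_lt (lt_of_le_of_lt (ENNReal.tsum_le_tsum fun i =>
      mul_le_mul' (le_refl (a i)) (h1 i)) ?_)
    rw [ENNReal.tsum_mul_right]
    refine ENNReal.mul_lt_top ?_ ofReal_lt_top
    change _root_.etot a < ∞
    rw [← h.etot]; exact ofReal_lt_top
  have h3 : ∀ j, eact (nM M) a y j ≠ ∞ := fun j =>
    ((ENNReal.le_tsum j).trans_lt h2.lt_top).ne
  have h4 : ∀ j, rowMul M p y j = (eact (nM M) a y j).toReal := by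
    intro j
    unfold eact rowMul
    rw [ENNReal.tsum_toReal_eq]
    · refine tsum_congr fun i => ?_
      rw [ENNReal.toReal_mul, ← h.2.2, nM, ENNReal.toReal_ofReal (h.1 i),
        ENNReal.toReal_ofReal (hMnn y i j)]
    · intro i
      exact ((ENNReal.le_tsum i).trans_lt (h3 j).lt_top).ne
  refine ⟨fun j => by rw [h4]; exact toReal_nonneg, ?_, fun j => by rw [h4, ENNReal.ofReal_toReal (h3 j)]⟩
  have := ENNReal.summable_toReal h2
  exact this.congr fun j => (h4 j).symm

/-- iterated action -/
noncomputable def eiter (N : F → E → E → ℝ≥0∞) (a : E → ℝ≥0∞) (l : List F) : E → ℝ≥0∞ :=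
  l.foldl (eact N) a

lemma VRep.iter {M : F → E → E → ℝ} (hMnn : ∀ y i j, 0 ≤ M y i j) (l : List F)
    (hl : ∀ y ∈ l, GoodY M y) {p : E → ℝ} {a : E → ℝ≥0∞} (h : VRep p a) :
    VRep (rowIter M p l) (eiter (nM M) a l) := by
  induction l generalizing p a with
  | nil => exact h
  | cons y l ih =>
    exact ih (fun z hz => hl z (List.mem_cons_of_mem _ hz))
      (h.mul hMnn (hl y List.mem_cons_self))

variable [Countable E] [MeasurableSpace F] {N : F → E → E → ℝ≥0∞} {φ : Measure F}

lemma measurable_eiter (hNm : ∀ i j, Measurable fun y => N y i j) (n : ℕ) :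
    Measurable fun q : (E → ℝ≥0∞) × (Fin n → F) => eiter N q.1 (List.ofFn q.2) := by
  induction n with
  | zero => simpa [eiter] using measurable_fst
  | succ n ih =>
    simp only [List.ofFn_succ, eiter, List.foldl_cons]
    refine ih.comp (Measurable.prodMk ?_ ?_)
    · exact (measurable_eact hNm).comp
        (measurable_fst.prodMk ((measurable_pi_apply 0).comp measurable_snd))
    · exact measurable_pi_lambda _ fun i => (measurable_pi_apply _).comp measurable_snd

lemma lintegral_pi_eiter [SigmaFinite φ] (hNm : ∀ i j, Measurable fun y => N y i j)
    {G : (E → ℝ≥0∞) × (E → ℝ≥0∞) → ℝ≥0∞} (hG : Measurable G) (n : ℕ) (a b : E → ℝ≥0∞) :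
    ∫⁻ v, G (eiter N a (List.ofFn v), eiter N b (List.ofFn v)) ∂(Measure.pi fun _ : Fin n => φ) =
      (KK N φ)^[n] G (a, b) := by
  induction n generalizing a b with
  | zero =>
    rw [Measure.pi_of_empty (fun _ : Fin 0 => φ) Fin.elim0]
    simp [eiter]
  | succ n ih =>
    have hmp := measurePreserving_piFinSuccAbove (fun _ : Fin (n+1) => φ) 0
    let h : F × (Fin n → F) → ℝ≥0∞ := fun q =>
      G (eiter N (eact N a q.1) (List.ofFn q.2), eiter N (eact N b q.1) (List.ofFn q.2))
    have hh : Measurable h := by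
      refine hG.comp (Measurable.prodMk ?_ ?_)
      · exact (measurable_eiter hNm n).comp
          (((measurable_eact_right hNm a).comp measurable_fst).prodMk measurable_snd)
      · exact (measurable_eiter hNm n).comp
          (((measurable_eact_right hNm b).comp measurable_fst).prodMk measurable_snd)
    have e1 : ∀ v : Fin (n+1) → F, G (eiter N a (List.ofFn v), eiter N b (List.ofFn v)) =
        h (MeasurableEquiv.piFinSuccAbove (fun _ => F) 0 v) := by
      intro v
      simp only [h, List.ofFn_succ, eiter, List.foldl_cons]
      rfl
    simp only [e1]
    rw [hmp.lintegral_comp hh, lintegral_prod _ hh.aemeasurable, Function.iterate_succ_apply']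
    refine lintegral_congr fun y => ?_
    exact ih (eact N a y) (eact N b y)

lemma ae_pi_good [SigmaFinite φ] {P : F → Prop} (h : ∀ᵐ y ∂φ, P y) (n : ℕ) :
    ∀ᵐ v ∂(Measure.pi fun _ : Fin n => φ), ∀ y ∈ List.ofFn v, P y := by
  have : ∀ k : Fin n, ∀ᵐ v ∂(Measure.pi fun _ : Fin n => φ), P (v k) := fun k =>
    (Measure.quasiMeasurePreserving_eval (fun _ : Fin n => φ) k).ae h
  filter_upwards [ae_all_iff.2 this] with v hv y hy
  obtain ⟨k, rfl⟩ := List.mem_ofFn.1 hy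
  exact hv k

lemma measurable_nM {M : F → E → E → ℝ} (hMmeas : ∀ i j, Measurable fun y => M y i j) :
    ∀ i j, Measurable fun y => nM M y i j := fun i j => (hMmeas i j).ennreal_ofReal

variable [SigmaFinite φ] {M : F → E → E → ℝ} 

lemma cyl_formula 
    (hMnn : ∀ y i j, 0 ≤ M y i j)
    (hMbd : ∀ᵐ y ∂φ, GoodY M y)
    (α : ProbVec E) (n : ℕ) (A : Set (Fin n → F)) :
      ∫⁻ v in A, ENNReal.ofReal (rowTot (rowIter M (α : E → ℝ) (List.ofFn v)))
          ∂(Measure.pi fun _ => φ) = 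
      ∫⁻ v in A, etot (eiter (nM M) (emb α) (List.ofFn v)) ∂(Measure.pi fun _ => φ) := by
  refine lintegral_congr_ae (ae_restrict_of_ae ?_)
  filter_upwards [ae_pi_good hMbd n] with v hv
  exact ((VRep.emb α).iter hMnn _ hv).etot

lemma cyl_bound (hMmeas : ∀ i j, Measurable fun y => M y i j)
    (α β : ProbVec E) (n : ℕ) (A : Set (Fin n → F)) :
      ∫⁻ v in A, etot (eiter (nM M) (emb α) (List.ofFn v)) ∂(Measure.pi fun _ => φ) ≤ 
      ∫⁻ v in A, etot (eiter (nM M) (emb β) (List.ofFn v)) ∂(Measure.pi fun _ => φ) + 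
      (KK (nM M) φ)^[n] tdiff (emb α, emb β) := by
  rw [← lintegral_pi_eiter (measurable_nM hMmeas) measurable_tdiff]
  have hm : Measurable fun v : Fin n → F => etot (eiter (nM M) (emb β) (List.ofFn v)) :=
    measurable_etot.comp ((measurable_eiter (measurable_nM hMmeas) n).comp
      (measurable_const.prodMk measurable_id))
  calc _ ≤ ∫⁻ v in A, (etot (eiter (nM M) (emb β) (List.ofFn v)) +
        tdiff (eiter (nM M) (emb α) (List.ofFn v), eiter (nM M) (emb β) (List.ofFn v)))
          ∂(Measure.pi fun _ => φ) := by
        refine lintegral_mono fun v => ?_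
        exact le_add_tsub
    _ ≤ _ := by
        rw [lintegral_add_left hm]
        gcongr
        exact Measure.restrict_le_self

open Classical in
noncomputable def pvd (i : E) : ProbVec E :=
  ⟨fun j => if j = i then 1 else 0, fun j => by dsimp only; split_ifs <;> norm_num, hasSum_ite_eq i 1⟩

lemma eact_pvd (N : F → E → E → ℝ≥0∞) (i : E) (y : F) : eact N (emb (pvd i)) y = N y i := by
  classical
  funext j
  unfold eact
  rw [tsum_eq_single i]
  · simp [emb, pvd]
  · intro k hk
    simp [emb, pvd, hk]

lemma hN_of (hMmeas : ∀ i j, Measurable fun y => M y i j)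
    (hMnn : ∀ y i j, 0 ≤ M y i j)
    (hMbd : ∀ᵐ y ∂φ, GoodY M y)
    (Q : ProbVec E → Measure (ℕ → F))
    (hQprob : ∀ μ, IsProbabilityMeasure (Q μ))
    (hQ : ∀ (μ : ProbVec E) (n : ℕ) (A : Set (Fin n → F)), MeasurableSet A →
      Q μ {y : ℕ → F | (fun k : Fin n => y k) ∈ A} =
        ∫⁻ v in A, ENNReal.ofReal (rowTot (rowIter M (μ : E → ℝ) (List.ofFn v)))
          ∂(Measure.pi fun _ => φ)) :
    ∀ i, ∫⁻ y, etot (nM M y i) ∂φ = 1 := by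
  intro i
  have h := hQ (pvd i) 1 Set.univ MeasurableSet.univ
  rw [cyl_formula hMnn hMbd, Measure.restrict_univ] at h
  have h2 := lintegral_pi_eiter (φ := φ) (measurable_nM hMmeas) measurable_etot1 1
    (emb (pvd i)) (emb (pvd i))
  simp only at h2
  rw [h2] at h
  simp only [Function.iterate_one, KK, pact, eact_pvd] at h
  rw [← h]
  simp

lemma transMat_eq (hMmeas : ∀ i j, Measurable fun y => M y i j)
    (hMnn : ∀ y i j, 0 ≤ M y i j)
    (hN : ∀ i, ∫⁻ y, etot (nM M y i) ∂φ = 1) (i j : E) :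
    ∫⁻ y, nM M y i j ∂φ = ENNReal.ofReal (transMat M φ i j) := by
  unfold transMat
  rw [integral_eq_lintegral_of_nonneg_ae (Eventually.of_forall fun y => hMnn y i j)
    (hMmeas i j).aestronglyMeasurable]
  rw [ENNReal.ofReal_toReal]; rfl
  have : ∫⁻ y, nM M y i j ∂φ ≤ 1 := by
    rw [← hN i]
    exact lintegral_mono fun y => ENNReal.le_tsum j
  exact (this.trans_lt one_lt_top).ne

end Part4
set_option linter.all false
open MeasureTheory Filter Topology ENNReal

section Part5
variable {E F : Type*}

lemma le_of_cyl [MeasurableSpace F] {μ ν : Measure (ℕ → F)} [IsProbabilityMeasure μ]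
    [IsProbabilityMeasure ν] {T : ℝ≥0∞}
    (h : ∀ (n : ℕ) (A : Set (Fin n → F)), MeasurableSet A →
      μ {y : ℕ → F | (fun k : Fin n => y k) ∈ A} ≤ ν {y : ℕ → F | (fun k : Fin n => y k) ∈ A} + T)
    {A : Set (ℕ → F)} (hA : MeasurableSet A) : μ A ≤ ν A + T := by
  have hc : ∀ B ∈ measurableCylinders (fun _ : ℕ => F), μ B ≤ ν B + T := by
    intro B hB
    obtain ⟨s, S, hS, rfl⟩ := (mem_measurableCylinders _).1 hB
    obtain ⟨n, hn⟩ : ∃ n, ∀ i ∈ s, i < n := ⟨s.sup id + 1, fun i hi =>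
      Nat.lt_succ_of_le (Finset.le_sup (f := id) hi)⟩
    let g : (Fin n → F) → (∀ i : s, F) := fun v i => v ⟨i.1, hn i.1 i.2⟩
    have hg : Measurable g := measurable_pi_lambda _ fun i => measurable_pi_apply _
    exact h n (g ⁻¹' S) (hg hS)
  refine ENNReal.le_of_forall_pos_le_add fun ε hε _ => ?_
  have hε2 : (0 : ℝ≥0∞) < ε / 2 := ENNReal.half_pos (by simpa using hε.ne')
  obtain ⟨B, hB, hBA⟩ := exists_measure_symmDiff_lt_of_generateFrom_isSetRing (μ := μ + ν)
    (isSetRing_measurableCylinders (α := fun _ : ℕ => F))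
    ⟨{Set.univ}, Set.countable_singleton _, by
      simpa using univ_mem_measurableCylinders (fun _ : ℕ => F), by simp⟩
    (generateFrom_measurableCylinders (α := fun _ : ℕ => F)).symm hA hε2
  rw [Measure.add_apply] at hBA
  have h1 : μ A ≤ μ B + ε / 2 := by
    calc μ A ≤ μ (B ∪ symmDiff B A) := measure_mono (by
            intro x hx
            by_cases hxB : x ∈ B
            · exact Or.inl hxB
            · exact Or.inr (Or.inr ⟨hx, hxB⟩))
      _ ≤ μ B + μ (symmDiff B A) := measure_union_le _ _
      _ ≤ _ := by gcongr; exact (le_self_add.trans hBA.le)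
  have h2 : ν B ≤ ν A + ε / 2 := by
    calc ν B ≤ ν (A ∪ symmDiff B A) := measure_mono (by
            intro x hx
            by_cases hxB : x ∈ A
            · exact Or.inl hxB
            · exact Or.inr (Or.inl ⟨hx, hxB⟩))
      _ ≤ ν A + ν (symmDiff B A) := measure_union_le _ _
      _ ≤ _ := by gcongr; exact (le_add_self.trans hBA.le)
  calc μ A ≤ (ν B + T) + ε / 2 := h1.trans (by gcongr; exact hc B hB)
    _ ≤ (ν A + ε / 2 + T) + ε / 2 := by gcongr
    _ = ν A + T + (ε / 2 + ε / 2) := by ring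
    _ = _ := by rw [ENNReal.add_halves]

lemma tv_of_le {X : Type*} [MeasurableSpace X] {μ ν : Measure X} [IsProbabilityMeasure μ]
    [IsProbabilityMeasure ν] {T : ℝ≥0∞} (h : ∀ A, MeasurableSet A → μ A ≤ ν A + T) :
    tvMeasure μ ν ≤ 4 * T := by
  have h' : ∀ A, MeasurableSet A → ν A ≤ μ A + T := by
    intro A hA
    have h1 : ν A + μ Aᶜ ≤ μ A + T + μ Aᶜ := by
      calc ν A + μ Aᶜ ≤ ν A + (ν Aᶜ + T) := by gcongr; exact h _ hA.compl
        _ = (ν A + ν Aᶜ) + T := by ring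
        _ = (μ A + μ Aᶜ) + T := by rw [measure_add_measure_compl hA, measure_add_measure_compl hA]; simp
        _ = _ := by ring
    exact (ENNReal.add_le_add_iff_right (measure_ne_top _ _)).1 h1
  unfold tvMeasure
  calc _ ≤ 2 * (2 * T) := by
        gcongr
        refine iSup₂_le fun A hA => ?_
        rw [two_mul]
        gcongr
        · exact tsub_le_iff_left.2 (h A hA)
        · exact tsub_le_iff_left.2 (h' A hA)
    _ = _ := by rw [← mul_assoc]; norm_num

variable [Countable E] [MeasurableSpace F] {N : F → E → E → ℝ≥0∞} {φ : Measure F} [SigmaFinite φ]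

lemma HH_eq (hNm : ∀ i j, Measurable fun y => N y i j) (d : ProbVec E) {a b : E → ℝ≥0∞}
    (ha : etot a ≠ 0) (ha' : etot a ≠ ∞) (hb : etot b ≠ 0) (hb' : etot b ≠ ∞) :
    HH N φ (a, b) = etot a * ⨆ m, (KK N φ)^[m] tdiff (emb (enormz d a), emb (enormz d b)) := by
  unfold HH
  rw [ENNReal.mul_iSup]
  refine iSup_congr fun m => ?_
  unfold Hm resc
  have e1 : (a, (etot a / etot b) • b) =
      (etot a • emb (enormz d a), etot a • emb (enormz d b)) := by
    rw [emb_enormz d ha ha', emb_enormz d hb hb', smul_smul, smul_smul,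
      ENNReal.mul_inv_cancel ha ha', one_smul, div_eq_mul_inv]
  simp only
  rw [e1, KKn_scale]
  have e2 : (fun q : (E → ℝ≥0∞) × (E → ℝ≥0∞) => tdiff (etot a • q.1, etot a • q.2)) =
      etot a • tdiff := by
    funext q
    simp only [tdiff, etot_smul, Pi.smul_apply, smul_eq_mul]
    rw [ENNReal.mul_sub (fun _ _ => ha')]
  rw [e2, KKn_smul hNm measurable_tdiff]
  rfl

lemma abstract_UO {M : F → E → E → ℝ} (hMmeas : ∀ i j, Measurable fun y => M y i j)
    (hMnn : ∀ y i j, 0 ≤ M y i j)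
    (hMbd : ∀ᵐ y ∂φ, GoodY M y)
    (Q : ProbVec E → Measure (ℕ → F))
    (hQprob : ∀ μ, IsProbabilityMeasure (Q μ))
    (hQ : ∀ (μ : ProbVec E) (n : ℕ) (A : Set (Fin n → F)), MeasurableSet A →
      Q μ {y : ℕ → F | (fun k : Fin n => y k) ∈ A} =
        ∫⁻ v in A, ENNReal.ofReal (rowTot (rowIter M (μ : E → ℝ) (List.ofFn v)))
          ∂(Measure.pi fun _ => φ))
    (hUO : ∀ ε : ℝ, 0 < ε → ∃ δ : ℝ, 0 < δ ∧ ∀ μ ν : ProbVec E,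
      tvMeasure (Q μ) (Q ν) < ENNReal.ofReal δ → tvDist μ ν < ε) (d : ProbVec E) :
    ∀ ε : ℝ≥0∞, 0 < ε → ∃ C : ℝ≥0∞, C < ∞ ∧ ∀ p : (E → ℝ≥0∞) × (E → ℝ≥0∞),
      (etot p.1 < ∞ ∧ etot p.2 < ∞) →
      ed (enormz d p.1) (enormz d p.2) * etot p.1 ≤ ε * etot p.1 + C * HH (nM M) φ p := by
  have hNm := measurable_nM hMmeas
  intro ε hε
  have hm0 : 0 < min ε 1 := lt_min hε one_pos
  have hm1 : min ε 1 ≠ ∞ := ((min_le_right _ _).trans_lt one_lt_top).ne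
  obtain ⟨δ, hδ, hUO⟩ := hUO (min ε 1).toReal (ENNReal.toReal_pos hm0.ne' hm1)
  have hδ' : ENNReal.ofReal δ ≠ 0 := by simpa using hδ
  refine ⟨8 / ENNReal.ofReal δ + 2, ?_, ?_⟩
  · exact ENNReal.add_lt_top.2 ⟨ENNReal.div_lt_top (by norm_num) hδ', by norm_num⟩
  rintro ⟨a, b⟩ ⟨ha', hb'⟩
  simp only at ha' hb' ⊢
  rcases eq_or_ne (etot a) 0 with ha | ha
  · simp [ha]
  rcases eq_or_ne (etot b) 0 with hb | hb
  · have hb0 : b = 0 := funext fun i => (ENNReal.tsum_eq_zero.1 hb) i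
    have : etot a ≤ HH (nM M) φ (a, b) := by
      refine le_trans ?_ (le_iSup (fun m => Hm (nM M) φ m (a, b)) 0)
      simp [Hm, tdiff, resc, hb0, etot]
    refine le_trans ?_ le_add_self
    refine mul_le_mul' ((ed_le_two _ _).trans le_add_self) this
  rw [HH_eq hNm d ha ha'.ne hb hb'.ne]
  set T := ⨆ m, (KK (nM M) φ)^[m] tdiff (emb (enormz d a), emb (enormz d b)) with hT
  have key : ed (enormz d a) (enormz d b) ≤ ε + (8 / ENNReal.ofReal δ + 2) * T := by
    by_cases h4 : 4 * T < ENNReal.ofReal δ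
    · refine le_trans ?_ le_self_add
      have htv : tvMeasure (Q (enormz d a)) (Q (enormz d b)) ≤ 4 * T := by
        haveI := hQprob (enormz d a)
        haveI := hQprob (enormz d b)
        refine tv_of_le fun A hA => le_of_cyl (fun n A hA => ?_) hA
        rw [hQ _ n A hA, hQ _ n A hA, cyl_formula hMnn hMbd, cyl_formula hMnn hMbd]
        refine (cyl_bound hMmeas _ (enormz d b) n A).trans ?_
        gcongr
        exact le_iSup (fun m => (KK (nM M) φ)^[m] tdiff (emb (enormz d a), emb (enormz d b))) n
      have := hUO _ _ (htv.trans_lt h4)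
      rw [ed_eq]
      calc _ ≤ ENNReal.ofReal (min ε 1).toReal := ENNReal.ofReal_le_ofReal this.le
        _ = min ε 1 := ENNReal.ofReal_toReal hm1
        _ ≤ ε := min_le_left _ _
    · refine le_trans ?_ le_add_self
      refine (ed_le_two _ _).trans ?_
      push Not at h4
      calc (2 : ℝ≥0∞) = 2 * (ENNReal.ofReal δ * (ENNReal.ofReal δ)⁻¹) := by
            rw [ENNReal.mul_inv_cancel hδ' ofReal_ne_top, mul_one]
        _ ≤ 2 * (4 * T * (ENNReal.ofReal δ)⁻¹) := by gcongr
        _ = 8 / ENNReal.ofReal δ * T := by rw [div_eq_mul_inv]; ring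
        _ ≤ _ := by gcongr; exact le_self_add
  calc _ ≤ (ε + (8 / ENNReal.ofReal δ + 2) * T) * etot a := by gcongr
    _ = _ := by ring

end Part5
set_option linter.all false
open MeasureTheory Filter Topology ENNReal

section Part6
variable {E F : Type*}

lemma tvDist_eq (α β : ProbVec E) : tvDist α β = 2 * ∑' i, max (α.1 i - β.1 i) 0 := by
  have hs : Summable fun i => max (α.1 i - β.1 i) 0 :=
    Summable.of_nonneg_of_le (fun i => le_max_right _ _)
      (fun i => max_le (le_abs_self _) (abs_nonneg _)) (summable_sub α β)
  have h1 : HasSum (fun i => α.1 i - β.1 i) 0 := by simpa using α.2.2.sub β.2.2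
  have h2 := (hs.hasSum.mul_left 2).sub h1
  unfold tvDist
  rw [sub_zero] at h2
  rw [← h2.tsum_eq]
  refine tsum_congr fun i => ?_
  rcases le_total (α.1 i - β.1 i) 0 with h | h
  · rw [max_eq_right h, abs_of_nonpos h]; ring
  · rw [max_eq_left h, abs_of_nonneg h]; ring

lemma tendsto_ed (α : ProbVec E) : Tendsto (fun β => ed α β) (𝓝 α) (𝓝 0) := by
  have h : Tendsto (fun β : ProbVec E => ∑' i, max (α.1 i - β.1 i) 0) (𝓝 α)
      (𝓝 (∑' i : E, (0 : ℝ))) := by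
    refine tendsto_tsum_of_dominated_convergence (bound := α.1) α.2.2.summable ?_ ?_
    · intro i
      have hc : Continuous fun β : ProbVec E => max (α.1 i - β.1 i) 0 :=
        (continuous_const.sub ((continuous_apply i).comp continuous_subtype_val)).max
          continuous_const
      have := hc.tendsto α
      simpa using this
    · refine Eventually.of_forall fun β i => ?_
      rw [Real.norm_of_nonneg (le_max_right _ _)]
      refine max_le ?_ (α.2.1 i)
      linarith [β.2.1 i]
  simp only [ed_eq, tvDist_eq]
  have h2 := ENNReal.tendsto_ofReal (h.const_mul 2)
  simpa using h2

lemma BLip.continuous {L : ℝ≥0∞} (hL : L < ∞) {f : ProbVec E → ℝ≥0∞} (hf : BLip L f) :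
    Continuous f := by
  rw [continuous_iff_continuousAt]
  intro α
  have hne : f α ≠ ∞ := ((hf.1 α).trans_lt one_lt_top).ne
  refine (ENNReal.tendsto_nhds hne).2 fun ε hε => ?_
  have h0 : Tendsto (fun β => L * ed α β) (𝓝 α) (𝓝 0) := by
    have := ENNReal.Tendsto.const_mul (a := L) (tendsto_ed α) (Or.inr hL.ne)
    simpa using this
  filter_upwards [ENNReal.tendsto_nhds_zero.1 h0 ε hε] with β hβ
  refine ⟨tsub_le_iff_right.2 ((hf.2 α β).trans (by gcongr)), (hf.2 β α).trans ?_⟩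
  rw [ed_comm]; gcongr

/-- ell one space structure -/
@[reducible] noncomputable def edSpace (E : Type*) : PseudoEMetricSpace (ProbVec E) where
  edist := ed
  edist_self := ed_self
  edist_comm := ed_comm
  edist_triangle := ed_triangle

lemma cont_aux {X : Type*} [PseudoEMetricSpace X] {g : X → ℝ}
    (h : ∀ x y, edist (g x) (g y) ≤ edist x y) : Continuous g :=
  LipschitzWith.continuous (K := 1) fun x y => by simpa using h x y

lemma edSpace_top : (edSpace E).toUniformSpace.toTopologicalSpace =
    (inferInstance : TopologicalSpace (ProbVec E)) := by
  refine TopologicalSpace.ext_nhds fun α => le_antisymm ?_ ?_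
  · have hc : @Continuous (ProbVec E) (ProbVec E) (edSpace E).toUniformSpace.toTopologicalSpace
        (inferInstance : TopologicalSpace (ProbVec E)) id := by
      refine (@continuous_induced_rng _ _ _ Subtype.val id _
        (edSpace E).toUniformSpace.toTopologicalSpace).2 ?_
      refine @continuous_pi _ _ _ (edSpace E).toUniformSpace.toTopologicalSpace _ _ fun i => ?_
      refine @cont_aux (ProbVec E) (edSpace E) (fun β => β.1 i) fun β γ => ?_
      rw [edist_dist, Real.dist_eq]
      exact ENNReal.le_tsum (f := fun i => ENNReal.ofReal |β.1 i - γ.1 i|) i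
    exact @Continuous.tendsto _ _ (edSpace E).toUniformSpace.toTopologicalSpace
        (inferInstance : TopologicalSpace (ProbVec E)) _ hc α
  · have : Tendsto (fun β : ProbVec E => ed β α) (𝓝 α) (𝓝 0) := by
      simpa only [ed_comm] using tendsto_ed α
    have := (@tendsto_iff_edist_tendsto_0 _ _ (edSpace E) (𝓝 α) id α).2 this
    exact this

lemma ext_lip {X : Type*} [PseudoEMetricSpace X] [MeasurableSpace X] [BorelSpace X]
    {μ ν : Measure X} [IsProbabilityMeasure μ] [IsProbabilityMeasure ν]
    (h : ∀ (L : NNReal) (f : X → NNReal), LipschitzWith L f → (∀ x, f x ≤ 1) →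
      ∫⁻ x, f x ∂μ = ∫⁻ x, f x ∂ν) : μ = ν := by
  refine ext_of_generate_finite _ (borel_eq_generateFrom_isClosed (α := X) ▸
    BorelSpace.measurable_eq (α := X)) isPiSystem_isClosed ?_ (by simp)
  intro s hs
  obtain ⟨u, -, u_pos, u_lim⟩ := exists_seq_strictAnti_tendsto (0 : ℝ)
  have h1 := tendsto_lintegral_thickenedIndicator_of_isClosed μ hs u_pos u_lim
  have h2 := tendsto_lintegral_thickenedIndicator_of_isClosed ν hs u_pos u_lim
  refine tendsto_nhds_unique h1 (h2.congr fun n => ?_)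
  exact (h _ _ (lipschitzWith_thickenedIndicator (u_pos n) s)
    (thickenedIndicator_le_one (u_pos n) s)).symm

lemma ext_BLip [Countable E] {μ ν : Measure (ProbVec E)} [IsProbabilityMeasure μ]
    [IsProbabilityMeasure ν]
    (h : ∀ (L : ℝ≥0∞) (f : ProbVec E → ℝ≥0∞), L < ∞ → BLip L f →
      ∫⁻ x, f x ∂μ = ∫⁻ x, f x ∂ν) : μ = ν := by
  have hB : @BorelSpace (ProbVec E) (edSpace E).toUniformSpace.toTopologicalSpace _ :=
    @BorelSpace.mk _ (edSpace E).toUniformSpace.toTopologicalSpace _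
      (by rw [edSpace_top]; exact BorelSpace.measurable_eq)
  refine @ext_lip (ProbVec E) (edSpace E) _ hB μ ν _ _ fun L f hf h1 => ?_
  refine h L (fun x => (f x : ℝ≥0∞)) coe_lt_top ⟨fun α => ENNReal.coe_le_one_iff.2 (h1 α), fun α β => ?_⟩
  have h2 : edist (f α) (f β) ≤ L * ed α β := hf α β
  rw [edist_nndist, NNReal.nndist_eq, ENNReal.coe_max] at h2
  have h3 : ((f α - f β : NNReal) : ℝ≥0∞) ≤ L * ed α β := (le_max_left _ _).trans h2
  rw [ENNReal.coe_sub] at h3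
  exact tsub_le_iff_left.1 h3

/-- unnormalized distance -/
noncomputable def eD (a b : E → ℝ≥0∞) : ℝ≥0∞ := etot (a - b) + etot (b - a)

lemma ed_eD (α β : ProbVec E) : ed α β = eD (emb α) (emb β) := by
  rw [ed_eq', ENNReal.tsum_add]; rfl

lemma etot_sub_le (a b : E → ℝ≥0∞) : etot a ≤ etot b + etot (a - b) := by
  unfold etot
  rw [← ENNReal.tsum_add]
  exact ENNReal.tsum_le_tsum fun i => le_add_tsub

lemma ed_mul_le (d : ProbVec E) {a b : E → ℝ≥0∞}
    (ha : etot a ≠ 0) (ha' : etot a ≠ ∞) (hb : etot b ≠ 0) (hb' : etot b ≠ ∞) :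
    ed (enormz d a) (enormz d b) * etot a ≤ 2 * eD a b := by
  set c := etot a / etot b with hc
  have hcb : etot b * c = etot a := ENNReal.mul_div_cancel hb hb'
  have e1 : ∀ i, emb (enormz d a) i * etot a = a i := fun i => emb_enormz_mul d ha' i
  have e2 : ∀ i, emb (enormz d b) i * etot a = b i * c := fun i => by
    rw [← hcb, ← mul_assoc, emb_enormz_mul d hb' i]
  rw [ed_eq', ← ENNReal.tsum_mul_right]
  have hct : c ≠ ∞ := (ENNReal.div_lt_top ha' hb).ne
  have hbi : ∀ i, b i ≠ ∞ := fun i => ((ENNReal.le_tsum i).trans_lt hb'.lt_top).ne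
  have e3 : ∀ i, (emb (enormz d a) i - emb (enormz d b) i +
      (emb (enormz d b) i - emb (enormz d a) i)) * etot a ≤
      ((a i - b i) + (b i - a i)) + (b i * (1 - c) + b i * (c - 1)) := by
    intro i
    rw [add_mul, ENNReal.sub_mul (fun _ _ => ha'), ENNReal.sub_mul (fun _ _ => ha'), e1, e2]
    rw [ENNReal.mul_sub (fun _ _ => hbi i), ENNReal.mul_sub (fun _ _ => hbi i), mul_one]
    calc _ ≤ ((a i - b i) + (b i - b i * c)) + ((b i * c - b i) + (b i - a i)) :=
          add_le_add tsub_le_tsub_add_tsub tsub_le_tsub_add_tsub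
      _ = _ := by ring
  refine (ENNReal.tsum_le_tsum e3).trans ?_
  rw [ENNReal.tsum_add, ENNReal.tsum_add, ENNReal.tsum_add, ENNReal.tsum_mul_right,
    ENNReal.tsum_mul_right]
  change etot (a - b) + etot (b - a) + (etot b * (1 - c) + etot b * (c - 1)) ≤ _
  rw [ENNReal.mul_sub (fun _ _ => hb'), ENNReal.mul_sub (fun _ _ => hb'), mul_one, hcb, two_mul]
  refine add_le_add le_rfl ?_
  unfold eD
  rw [add_comm]
  exact add_le_add (tsub_le_iff_left.2 (etot_sub_le _ _)) (tsub_le_iff_left.2 (etot_sub_le _ _))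

lemma Lf_lip (d : ProbVec E) {L : ℝ≥0∞} {f : ProbVec E → ℝ≥0∞} (hf : BLip L f)
    {a b : E → ℝ≥0∞} (ha' : etot a ≠ ∞) (hb' : etot b ≠ ∞) :
    f (enormz d a) * etot a ≤ f (enormz d b) * etot b + (1 + 2 * L) * eD a b := by
  rcases eq_or_ne (etot a) 0 with ha | ha
  · simp [ha]
  have hle : etot a ≤ etot b + eD a b := (etot_sub_le a b).trans (by unfold eD; gcongr; exact le_self_add)
  rcases eq_or_ne (etot b) 0 with hb | hb
  · calc _ ≤ 1 * etot a := by gcongr; exact hf.1 _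
      _ ≤ eD a b := by rw [one_mul]; simpa [hb] using hle
      _ = 1 * eD a b := (one_mul _).symm
      _ ≤ (1 + 2 * L) * eD a b := by gcongr; exact le_self_add
      _ ≤ _ := le_add_self
  calc f (enormz d a) * etot a
      ≤ (f (enormz d b) + L * ed (enormz d a) (enormz d b)) * etot a := by gcongr; exact hf.2 _ _
    _ = f (enormz d b) * etot a + L * (ed (enormz d a) (enormz d b) * etot a) := by ring
    _ ≤ f (enormz d b) * (etot b + eD a b) + L * (2 * eD a b) := by
        exact add_le_add (by gcongr) (mul_le_mul' le_rfl (ed_mul_le d ha ha' hb hb'))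
    _ = f (enormz d b) * etot b + (f (enormz d b) + 2 * L) * eD a b := by ring
    _ ≤ _ := by gcongr; exact hf.1 _

lemma eact_sub_le (N : F → E → E → ℝ≥0∞) (a b : E → ℝ≥0∞) (y : F) :
    etot (eact N a y - eact N b y) ≤ etot (eact N (a - b) y) := by
  refine etot_mono fun j => ?_
  rw [Pi.sub_apply]
  refine tsub_le_iff_left.2 ?_
  unfold eact
  rw [← ENNReal.tsum_add]
  refine ENNReal.tsum_le_tsum fun i => ?_
  rw [← add_mul]
  gcongr
  exact le_add_tsub

variable [Countable E] [MeasurableSpace F] {N : F → E → E → ℝ≥0∞} {φ : Measure F} [SigmaFinite φ]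

lemma Pie_BLip (hNm : ∀ i j, Measurable fun y => N y i j)
    (hN : ∀ i, ∫⁻ y, etot (N y i) ∂φ = 1) (d : ProbVec E) {L : ℝ≥0∞} {f : ProbVec E → ℝ≥0∞}
    (hfm : Measurable f) (hf : BLip L f) : BLip (1 + 2 * L) (Pie N φ d f) := by
  constructor
  · intro α
    unfold Pie KK Lf pact
    calc _ ≤ ∫⁻ y, etot (eact N (emb α) y) ∂φ := by
          refine lintegral_mono fun y => ?_
          calc _ ≤ 1 * etot (eact N (emb α) y) := by dsimp only; gcongr; exact hf.1 _
            _ = _ := one_mul _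
      _ = 1 := by rw [lintegral_etot hNm hN, etot_emb]
  · intro α β
    have hme : ∀ a : E → ℝ≥0∞, Measurable fun y => etot (eact N a y) := fun a =>
      measurable_etot.comp (measurable_eact_right hNm a)
    have hml : Measurable fun y => f (enormz d (eact N (emb β) y)) * etot (eact N (emb β) y) :=
      (hfm.comp ((measurable_enormz d).comp (measurable_eact_right hNm _))).mul (hme _)
    have hadd : Measurable fun y =>
        etot (eact N (emb α - emb β) y) + etot (eact N (emb β - emb α) y) := (hme _).add (hme _)
    unfold Pie KK Lf pact
    calc _ ≤ ∫⁻ y, (f (enormz d (eact N (emb β) y)) * etot (eact N (emb β) y) + (1 + 2 * L) *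
            (etot (eact N (emb α - emb β) y) + etot (eact N (emb β - emb α) y))) ∂φ := by
          refine lintegral_mono_ae ?_
          filter_upwards [ae_etot_lt hNm hN (a := emb α) (by simp [etot_emb]),
            ae_etot_lt hNm hN (a := emb β) (by simp [etot_emb])] with y h1 h2
          refine (Lf_lip d hf h1.ne h2.ne).trans ?_
          unfold eD
          gcongr <;> exact eact_sub_le _ _ _ _
      _ = _ := by
          rw [lintegral_add_left hml, lintegral_const_mul _ hadd,
            lintegral_add_left (hme _), lintegral_etot hNm hN, lintegral_etot hNm hN, ed_eD]
          rfl

end Part6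
set_option linter.all false
open MeasureTheory Filter Topology ENNReal

section Part7
variable {E F : Type*} [Countable E] [MeasurableSpace F] {φ : Measure F} [SigmaFinite φ]
  {M : F → E → E → ℝ}

lemma filterStep_eq (hMnn : ∀ y i j, 0 ≤ M y i j) {y : F} (hy : GoodY M y) (d α : ProbVec E)
    (hw : rowTot (rowMul M α.1 y) ≠ 0) :
    filterStep M α y = enormz d (eact (nM M) (emb α) y) := by
  have hV := VRep.mul hMnn hy (VRep.emb α)
  have hw0 : 0 ≤ rowTot (rowMul M α.1 y) := tsum_nonneg hV.1
  have key : ∀ j, (enormz d (eact (nM M) (emb α) y)).1 j * rowTot (rowMul M α.1 y) =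
      rowMul M α.1 y j := by
    intro j
    have h1 := emb_enormz_mul d (a := eact (nM M) (emb α) y)
      (by rw [← hV.etot]; exact ofReal_ne_top) j
    rw [← hV.etot, ← hV.2.2 j] at h1
    have h2 := congrArg ENNReal.toReal h1
    rw [ENNReal.toReal_mul, ENNReal.toReal_ofReal hw0, ENNReal.toReal_ofReal (hV.1 j),
      emb_toReal] at h2
    exact h2
  have hex : ∃ ν : ProbVec E, ∀ j, (ν : E → ℝ) j * rowTot (rowMul M (α : E → ℝ) y) =
    rowMul M (α : E → ℝ) y j := ⟨_, key⟩
  unfold filterStep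
  rw [dif_pos hex]
  apply Subtype.ext
  funext j
  exact mul_right_cancel₀ hw ((hex.choose_spec j).trans (key j).symm)

lemma filterKernel_eq (hMmeas : ∀ i j, Measurable fun y => M y i j) (hMnn : ∀ y i j, 0 ≤ M y i j)
    (hMbd : ∀ᵐ y ∂φ, GoodY M y) (hN : ∀ i, ∫⁻ y, etot (nM M y i) ∂φ = 1)
    (d : ProbVec E) {f : ProbVec E → ℝ} (hf : Measurable f) (α : ProbVec E) :
    filterKernel M φ f α = ∫ β, f β ∂(kap (φ := φ) (measurable_nM hMmeas) d α) := by
  have hm := measurable_eact_right (measurable_nM hMmeas) (emb α)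
  have hm2 : Measurable fun y => enormz d (eact (nM M) (emb α) y) := (measurable_enormz d).comp hm
  have hm3 : Measurable fun y => etot (eact (nM M) (emb α) y) := measurable_etot.comp hm
  change _ = ∫ β, f β ∂(kapM (nM M) φ d α)
  unfold kapM filterKernel
  rw [integral_map hm2.aemeasurable hf.aestronglyMeasurable,
    integral_withDensity_eq_integral_toReal_smul hm3
      (ae_etot_lt (measurable_nM hMmeas) hN (by simp [etot_emb]))]
  refine integral_congr_ae ?_
  filter_upwards [hMbd] with y hy
  have hV := VRep.mul hMnn hy (VRep.emb α)
  have hw0 : 0 ≤ rowTot (rowMul M α.1 y) := tsum_nonneg hV.1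
  rw [← hV.etot, ENNReal.toReal_ofReal hw0, smul_eq_mul, mul_comm]
  by_cases hw : rowTot (rowMul M α.1 y) = 0
  · simp [hw]
  · rw [filterStep_eq hMnn hy d α hw]

lemma integral_bind_kernel {X : Type*} [MeasurableSpace X] (κ : ProbabilityTheory.Kernel X X)
    [ProbabilityTheory.IsMarkovKernel κ] (μ : Measure X) [IsProbabilityMeasure μ] {f : X → ℝ}
    (hf : Integrable f (μ.bind κ)) : ∫ x, f x ∂(μ.bind κ) = ∫ x, ∫ z, f z ∂(κ x) ∂μ := by
  have := ProbabilityTheory.Kernel.integral_comp (κ := ProbabilityTheory.Kernel.const Unit μ)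
    (η := κ) (a := ()) (f := f)
  rw [ProbabilityTheory.Kernel.comp_apply, ProbabilityTheory.Kernel.const_apply] at this
  exact this hf

lemma isPi_iff (hMmeas : ∀ i j, Measurable fun y => M y i j) (hMnn : ∀ y i j, 0 ≤ M y i j)
    (hMbd : ∀ᵐ y ∂φ, GoodY M y) (hN : ∀ i, ∫⁻ y, etot (nM M y i) ∂φ = 1)
    (d : ProbVec E) (𝕄 : ProbabilityMeasure (ProbVec E)) :
    IsPiInvariant M φ 𝕄 ↔
      (𝕄 : Measure (ProbVec E)).bind (kap (φ := φ) (measurable_nM hMmeas) d) = 𝕄 := by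
  haveI := isMarkov_kap (φ := φ) (measurable_nM hMmeas) hN d
  haveI : IsProbabilityMeasure
    ((𝕄 : Measure (ProbVec E)).bind (kap (φ := φ) (measurable_nM hMmeas) d)) := inferInstance
  have key : ∀ f : ProbVec E → ℝ, IsBddCont f →
      ∫ μ, filterKernel M φ f μ ∂(𝕄 : Measure (ProbVec E)) =
      ∫ μ, f μ ∂((𝕄 : Measure (ProbVec E)).bind (kap (φ := φ) (measurable_nM hMmeas) d)) := by
    rintro f ⟨hc, C, hC⟩
    rw [integral_bind_kernel]
    · exact integral_congr_ae (Eventually.of_forall fun α =>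
        filterKernel_eq hMmeas hMnn hMbd hN d hc.measurable α)
    · exact Integrable.of_bound hc.measurable.aestronglyMeasurable C
        (Eventually.of_forall fun α => hC α)
  constructor
  · intro h
    haveI : HasOuterApproxClosed (ProbVec E) := by
      haveI : TopologicalSpace.MetrizableSpace (E → ℝ) := UniformSpace.metrizableSpace
      haveI : TopologicalSpace.MetrizableSpace (ProbVec E) :=
        Topology.IsEmbedding.subtypeVal.metrizableSpace
      letI := TopologicalSpace.metrizableSpaceMetric (ProbVec E); infer_instance
    refine ext_of_forall_integral_eq_of_IsFiniteMeasure fun f => ?_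
    have hb : IsBddCont (f : ProbVec E → ℝ) := ⟨f.continuous, ‖f‖, fun α => f.norm_coe_le_norm α⟩
    rw [← key f hb]; exact h f hb
  · intro h f hf
    rw [key f hf, h]

end Part7
set_option linter.all false
open MeasureTheory Filter Topology ENNReal

section Part8
variable {E F : Type*}

lemma compact_K (s : ℕ → Finset E) :
    IsCompact {α : ProbVec E | ∀ k : ℕ, 1 - 1 / ((k : ℝ) + 1) ≤ ∑ i ∈ s k, α.1 i} := by
  rw [Subtype.isCompact_iff]
  have hsum : ∀ t : Finset E, Continuous fun p : E → ℝ => ∑ i ∈ t, p i := fun t =>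
    continuous_finset_sum _ fun i _ => continuous_apply i
  have hcl : IsClosed ({p : E → ℝ | ∀ t : Finset E, ∑ i ∈ t, p i ≤ 1} ∩
      {p : E → ℝ | ∀ k : ℕ, 1 - 1 / ((k : ℝ) + 1) ≤ ∑ i ∈ s k, p i}) := by
    refine IsClosed.inter ?_ ?_
    · simp only [Set.ofPred_forall]
      exact isClosed_iInter fun t => isClosed_le (hsum t) continuous_const
    · simp only [Set.ofPred_forall]
      exact isClosed_iInter fun t => isClosed_le continuous_const (hsum _)
  have hc := (isCompact_univ_pi (ι := E) (X := fun _ => ℝ) (s := fun _ => Set.Icc (0:ℝ) 1)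
    fun _ => isCompact_Icc).inter_right hcl
  convert hc using 1
  ext p
  constructor
  · rintro ⟨α, hα, rfl⟩
    refine ⟨fun i _ => ⟨α.2.1 i, ?_⟩, fun t => ?_, hα⟩
    · exact le_hasSum α.2.2 i fun j _ => α.2.1 j
    · exact sum_le_hasSum t (fun j _ => α.2.1 j) α.2.2
  · rintro ⟨h1, h2, h3⟩
    have h0 : ∀ i, 0 ≤ p i := fun i => (h1 i trivial).1
    refine ⟨⟨p, h0, ?_⟩, h3, rfl⟩
    refine hasSum_of_isLUB_of_nonneg _ h0 ⟨?_, ?_⟩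
    · rintro _ ⟨t, rfl⟩; exact h2 t
    · intro b hb
      have hb' : ∀ k : ℕ, 1 - 1 / ((k : ℝ) + 1) ≤ b := fun k => (h3 k).trans (hb ⟨s k, rfl⟩)
      have hl : Tendsto (fun k : ℕ => 1 - 1 / ((k : ℝ) + 1)) atTop (𝓝 (1 - 0)) :=
        tendsto_const_nhds.sub tendsto_one_div_add_atTop_nhds_zero_nat
      rw [sub_zero] at hl
      exact le_of_tendsto' hl hb'

variable [Countable E]

lemma tail_int (lam : ProbVec E) (μ : Measure (ProbVec E)) [IsProbabilityMeasure μ]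
    (hb : ∀ i, ∫⁻ α, emb α i ∂μ = emb lam i) (t : Finset E) :
    ∫⁻ α, ENNReal.ofReal (1 - ∑ i ∈ t, α.1 i) ∂μ = ENNReal.ofReal (1 - ∑ i ∈ t, lam.1 i) := by
  have hme : ∀ i, Measurable fun α : ProbVec E => emb α i := fun i =>
    (measurable_pi_apply i).comp measurable_emb
  have hp : ∀ α : ProbVec E, ENNReal.ofReal (1 - ∑ i ∈ t, α.1 i) + ∑ i ∈ t, emb α i = 1 := by
    intro α
    have : ∑ i ∈ t, emb α i = ENNReal.ofReal (∑ i ∈ t, α.1 i) :=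
      (ENNReal.ofReal_sum_of_nonneg fun i _ => α.2.1 i).symm
    rw [this, ← ENNReal.ofReal_add]
    · simp
    · linarith [sum_le_hasSum t (fun j _ => α.2.1 j) α.2.2]
    · exact Finset.sum_nonneg fun i _ => α.2.1 i
  have hms : Measurable fun α : ProbVec E => ∑ i ∈ t, emb α i :=
    Finset.measurable_fun_sum _ fun i _ => hme i
  have h1 : ∫⁻ α, (ENNReal.ofReal (1 - ∑ i ∈ t, α.1 i) + ∑ i ∈ t, emb α i) ∂μ = 1 := by
    simp [hp]
  rw [lintegral_add_right _ hms, lintegral_finsetSum _ fun i _ => hme i] at h1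
  simp only [hb] at h1
  rw [← hp lam] at h1
  refine (ENNReal.add_left_inj ?_).1 h1
  exact (ENNReal.sum_lt_top.2 fun i _ => ofReal_lt_top).ne

lemma tight_bary (lam : ProbVec E) : IsTightMeasureSet
    {μ : Measure (ProbVec E) | IsProbabilityMeasure μ ∧ ∀ i, ∫⁻ α, emb α i ∂μ = emb lam i} := by
  rw [isTightMeasureSet_iff_exists_isCompact_measure_compl_le]
  intro ε hε
  obtain ⟨e, he, hes⟩ := ENNReal.exists_pos_sum_of_countable hε.ne' ℕ
  have hs : ∀ k : ℕ, ∃ t : Finset E, 1 - ∑ i ∈ t, lam.1 i ≤ 1 / ((k : ℝ) + 1) * e k := by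
    intro k
    have hp : (0:ℝ) < 1 / ((k : ℝ) + 1) * e k := mul_pos (by positivity) (he k)
    have := (tendsto_order.1 lam.2.2).1 (1 - 1 / ((k : ℝ) + 1) * e k) (by linarith)
    obtain ⟨t, ht⟩ := this.exists
    exact ⟨t, by linarith⟩
  choose s hs using hs
  refine ⟨_, compact_K s, ?_⟩
  rintro μ ⟨hμ, hb⟩
  have hsub : {α : ProbVec E | ∀ k : ℕ, 1 - 1 / ((k : ℝ) + 1) ≤ ∑ i ∈ s k, α.1 i}ᶜ ⊆
      ⋃ k : ℕ, {α : ProbVec E | ENNReal.ofReal (1 / ((k : ℝ) + 1)) ≤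
        ENNReal.ofReal (1 - ∑ i ∈ s k, α.1 i)} := by
    intro α hα
    simp only [Set.mem_compl_iff, Set.mem_ofPred_eq, not_forall, not_le] at hα
    obtain ⟨k, hk⟩ := hα
    exact Set.mem_iUnion.2 ⟨k, ENNReal.ofReal_le_ofReal (by linarith)⟩
  refine (measure_mono hsub).trans ((measure_iUnion_le _).trans (le_trans ?_ hes.le))
  refine ENNReal.tsum_le_tsum fun k => ?_
  have hm : Measurable fun α : ProbVec E => ENNReal.ofReal (1 - ∑ i ∈ s k, α.1 i) := by
    refine ENNReal.measurable_ofReal.comp (measurable_const.sub (Finset.measurable_fun_sum _ fun i _ => ?_))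
    exact (measurable_pi_apply i).comp measurable_subtype_coe
  have h := mul_meas_ge_le_lintegral (μ := μ) hm (ENNReal.ofReal (1 / ((k : ℝ) + 1)))
  rw [tail_int lam μ hb] at h
  have hη : (0:ℝ) < 1 / ((k : ℝ) + 1) := by positivity
  have h2 := h.trans (ENNReal.ofReal_le_ofReal (hs k))
  rw [ENNReal.ofReal_mul hη.le, ENNReal.ofReal_coe_nnreal] at h2
  exact (ENNReal.mul_le_mul_iff_right (by simpa using hη) ofReal_ne_top).1 h2

lemma tendsto_BLip {ι : Type*} {U : Filter ι} {μs : ι → ProbabilityMeasure (ProbVec E)}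
    {μ : ProbabilityMeasure (ProbVec E)} (h : Tendsto μs U (𝓝 μ)) {L : ℝ≥0∞} (hL : L < ∞)
    {f : ProbVec E → ℝ≥0∞} (hf : BLip L f) :
    Tendsto (fun i => ∫⁻ α, f α ∂(μs i : Measure (ProbVec E))) U
      (𝓝 (∫⁻ α, f α ∂(μ : Measure (ProbVec E)))) := by
  have hne : ∀ α, f α ≠ ∞ := fun α => ((hf.1 α).trans_lt one_lt_top).ne
  have hc : Continuous fun α => (f α).toNNReal := by
    rw [continuous_iff_continuousAt]
    exact fun α => (ENNReal.tendsto_toNNReal (hne α)).comp (hf.continuous hL).continuousAt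
  have h1 : ∀ α, (f α).toNNReal ≤ 1 := fun α => by
    have := ENNReal.toNNReal_mono one_ne_top (hf.1 α); simpa using this
  let g : BoundedContinuousFunction (ProbVec E) NNReal :=
    BoundedContinuousFunction.mkOfBound ⟨fun α => (f α).toNNReal, hc⟩ 1 (by
      intro x y
      rw [NNReal.dist_eq, abs_sub_le_iff]
      have hx : ((f x).toNNReal : ℝ) ≤ 1 := by exact_mod_cast h1 x
      have hy : ((f y).toNNReal : ℝ) ≤ 1 := by exact_mod_cast h1 y
      have := (f x).toNNReal.2
      have := (f y).toNNReal.2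
      constructor <;> simp only [ContinuousMap.coe_mk] <;> linarith [NNReal.coe_nonneg (f x).toNNReal, NNReal.coe_nonneg (f y).toNNReal])
  have hg : ∀ α, (g α : ℝ≥0∞) = f α := fun α => ENNReal.coe_toNNReal (hne α)
  have := ProbabilityMeasure.tendsto_iff_forall_lintegral_tendsto.1 h g
  simpa only [hg] using this

variable [MeasurableSpace F] {N : F → E → E → ℝ≥0∞} {φ : Measure F} [SigmaFinite φ]

lemma bary_bind (hNm : ∀ i j, Measurable fun y => N y i j)
    (hN : ∀ i, ∫⁻ y, etot (N y i) ∂φ = 1) (d : ProbVec E) (μ : Measure (ProbVec E)) (j : E) :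
    ∫⁻ β, emb β j ∂(μ.bind (kap (φ := φ) hNm d)) =
      ∑' i, (∫⁻ α, emb α i ∂μ) * ∫⁻ y, N y i j ∂φ := by
  have hme : ∀ i, Measurable fun α : ProbVec E => emb α i := fun i =>
    (measurable_pi_apply i).comp measurable_emb
  rw [lintegral_bind_kap hNm d μ (hme j)]
  have h : ∀ α, Pie N φ d (fun β => emb β j) α = ∑' i, emb α i * ∫⁻ y, N y i j ∂φ := by
    intro α
    unfold Pie KK Lf pact
    calc _ = ∫⁻ y, ∑' i, emb α i * N y i j ∂φ := by
          refine lintegral_congr_ae ?_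
          filter_upwards [ae_etot_lt hNm hN (a := emb α) (by simp [etot_emb])] with y hy
          exact emb_enormz_mul d hy.ne j
      _ = _ := by
          rw [lintegral_tsum fun i => ((hNm i j).const_mul _).aemeasurable]
          exact tsum_congr fun i => lintegral_const_mul _ (hNm i j)
  simp only [h]
  rw [lintegral_tsum fun i => ((hme i).mul_const _).aemeasurable]
  exact tsum_congr fun i => lintegral_mul_const _ (hme i)

/-- iterates of the kernel started at `lam` -/
noncomputable def itM (hNm : ∀ i j, Measurable fun y => N y i j) (φ : Measure F) [SigmaFinite φ]
    (d lam : ProbVec E) : ℕ → Measure (ProbVec E)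
  | 0 => Measure.dirac lam
  | n + 1 => (itM hNm φ d lam n).bind (kap (φ := φ) hNm d)

lemma itM_prob (hNm : ∀ i j, Measurable fun y => N y i j)
    (hN : ∀ i, ∫⁻ y, etot (N y i) ∂φ = 1) (d lam : ProbVec E) (n : ℕ) :
    IsProbabilityMeasure (itM hNm φ d lam n) := by
  haveI := isMarkov_kap (φ := φ) hNm hN d
  induction n with
  | zero => unfold itM; infer_instance
  | succ n ih => unfold itM; infer_instance

lemma itM_lint (hNm : ∀ i j, Measurable fun y => N y i j) (d lam : ProbVec E) (n : ℕ)
    {f : ProbVec E → ℝ≥0∞} (hf : Measurable f) :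
    ∫⁻ α, f α ∂(itM hNm φ d lam n) = (Pie N φ d)^[n] f lam := by
  induction n generalizing f with
  | zero => exact lintegral_dirac' _ hf
  | succ n ih =>
    unfold itM
    rw [lintegral_bind_kap hNm d _ hf, ih (measurable_Pie hNm d hf), Function.iterate_succ_apply]

lemma itM_bary (hNm : ∀ i j, Measurable fun y => N y i j)
    (hN : ∀ i, ∫⁻ y, etot (N y i) ∂φ = 1) (d lam : ProbVec E)
    (hlam : ∀ j, ∑' i, emb lam i * ∫⁻ y, N y i j ∂φ = emb lam j) (n : ℕ) (j : E) :
    ∫⁻ α, emb α j ∂(itM hNm φ d lam n) = emb lam j := by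
  have hme : ∀ i, Measurable fun α : ProbVec E => emb α i := fun i =>
    (measurable_pi_apply i).comp measurable_emb
  induction n generalizing j with
  | zero => exact lintegral_dirac' _ (hme j)
  | succ n ih =>
    unfold itM
    rw [bary_bind hNm hN]
    simp only [ih]
    exact hlam j

lemma inv_exists (hNm : ∀ i j, Measurable fun y => N y i j)
    (hN : ∀ i, ∫⁻ y, etot (N y i) ∂φ = 1) (d lam : ProbVec E)
    (hUO : ∀ ε : ℝ≥0∞, 0 < ε → ∃ C : ℝ≥0∞, C < ∞ ∧ ∀ p : (E → ℝ≥0∞) × (E → ℝ≥0∞),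
      (etot p.1 < ∞ ∧ etot p.2 < ∞) →
      ed (enormz d p.1) (enormz d p.2) * etot p.1 ≤ ε * etot p.1 + C * HH N φ p)
    (hlam : ∀ j, ∑' i, emb lam i * ∫⁻ y, N y i j ∂φ = emb lam j) :
    ∃ 𝕄 : ProbabilityMeasure (ProbVec E),
      (𝕄 : Measure (ProbVec E)).bind (kap (φ := φ) hNm d) = 𝕄 := by
  haveI := isMarkov_kap (φ := φ) hNm hN d
  let μs : ℕ → ProbabilityMeasure (ProbVec E) := fun n =>
    ⟨itM hNm φ d lam n, itM_prob hNm hN d lam n⟩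
  have hS : IsCompact (closure (Set.range μs)) := by
    refine isCompact_closure_of_isTightMeasureSet ((tight_bary lam).subset ?_)
    rintro _ ⟨_, ⟨n, rfl⟩, rfl⟩
    exact ⟨itM_prob hNm hN d lam n, itM_bary hNm hN d lam hlam n⟩
  obtain ⟨𝕄, -, h𝕄⟩ := hS.ultrafilter_le_nhds ((hyperfilter ℕ).map μs) (by
    rw [le_principal_iff]
    refine Filter.mem_of_superset ?_ subset_closure
    exact Ultrafilter.mem_map.2 (Filter.univ_mem' fun n => ⟨n, rfl⟩))
  have hT : Tendsto μs (hyperfilter ℕ : Filter ℕ) (𝓝 𝕄) := h𝕄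
  refine ⟨𝕄, ext_BLip fun L f hL hf => ?_⟩
  have hfm : Measurable f := (hf.continuous hL).measurable
  rw [lintegral_bind_kap hNm d _ hfm]
  have hL' : 1 + 2 * L < ∞ := ENNReal.add_lt_top.2 ⟨one_lt_top, ENNReal.mul_lt_top (by simp) hL⟩
  have t1 := tendsto_BLip hT hL hf
  have t2 := tendsto_BLip hT hL' (Pie_BLip hNm hN d hfm hf)
  have e1 : ∀ n, ∫⁻ α, f α ∂(μs n : Measure (ProbVec E)) = (Pie N φ d)^[n] f lam := fun n =>
    itM_lint hNm d lam n hfm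
  have e2 : ∀ n, ∫⁻ α, Pie N φ d f α ∂(μs n : Measure (ProbVec E)) =
      ∫⁻ α, (Pie N φ d)^[n] f α ∂(itM hNm φ d lam 1) := fun n => by
    rw [itM_lint hNm d lam 1 (measurable_Pien hNm d hfm n)]
    refine (itM_lint hNm d lam n (measurable_Pie hNm d hfm)).trans ?_
    rw [← Function.iterate_succ_apply, Function.iterate_one, Function.iterate_succ_apply']
  have key : ∀ ε : ℝ≥0∞, 0 < ε → 
      ∀ᶠ n in (hyperfilter ℕ : Filter ℕ), 
      ∫⁻ α, Pie N φ d f α ∂(μs n : Measure (ProbVec E)) ≤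
        ∫⁻ α, f α ∂(μs n : Measure (ProbVec E)) + ε ∧
      ∫⁻ α, f α ∂(μs n : Measure (ProbVec E)) ≤
        ∫⁻ α, Pie N φ d f α ∂(μs n : Measure (ProbVec E)) + ε := by
    intro ε hε
    filter_upwards [Nat.hyperfilter_le_atTop (merging hNm hN d lam hUO hL hfm hf hε)] with n hn
    rw [e1, e2]
    exact hn _ (itM_prob hNm hN d lam 1) (itM_bary hNm hN d lam hlam 1)
  refine le_antisymm ?_ ?_
  · refine ENNReal.le_of_forall_pos_le_add fun ε hε _ => ?_
    exact le_of_tendsto_of_tendsto t2 (t1.add_const _)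
      ((key ε (by exact_mod_cast hε)).mono fun n h => h.1)
  · refine ENNReal.le_of_forall_pos_le_add fun ε hε _ => ?_
    exact le_of_tendsto_of_tendsto t1 (t2.add_const _)
      ((key ε (by exact_mod_cast hε)).mono fun n h => h.2)

lemma inv_bary (hNm : ∀ i j, Measurable fun y => N y i j)
    (hN : ∀ i, ∫⁻ y, etot (N y i) ∂φ = 1) (d lam : ProbVec E)
    (hUn : ∀ ρ : ProbVec E, (∀ j, ∑' i, emb ρ i * ∫⁻ y, N y i j ∂φ = emb ρ j) → ρ = lam)
    (μ : Measure (ProbVec E)) [IsProbabilityMeasure μ] (hμ : μ.bind (kap (φ := φ) hNm d) = μ)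
    (i : E) : ∫⁻ α, emb α i ∂μ = emb lam i := by
  have hme : ∀ i, Measurable fun α : ProbVec E => emb α i := fun i =>
    (measurable_pi_apply i).comp measurable_emb
  set a : E → ℝ≥0∞ := fun i => ∫⁻ α, emb α i ∂μ with ha
  have h1 : etot a = 1 := by
    unfold etot
    rw [ha, ← lintegral_tsum fun i => (hme i).aemeasurable]
    have : ∀ α : ProbVec E, ∑' i, emb α i = 1 := etot_emb
    simp [this]
  have h2 : emb (enormz d a) = a := by
    rw [emb_enormz d (by simp [h1]) (by simp [h1]), h1]; simp
  have h3 : enormz d a = lam := hUn _ fun j => by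
    rw [h2]
    have := bary_bind hNm hN d μ j
    rw [hμ] at this
    exact this.symm
  rw [← h3, h2]

lemma inv_iter (hNm : ∀ i j, Measurable fun y => N y i j) (d : ProbVec E)
    (μ : Measure (ProbVec E)) (hμ : μ.bind (kap (φ := φ) hNm d) = μ)
    {f : ProbVec E → ℝ≥0∞} (hf : Measurable f) (n : ℕ) :
    ∫⁻ α, (Pie N φ d)^[n] f α ∂μ = ∫⁻ α, f α ∂μ := by
  induction n generalizing f with
  | zero => rfl
  | succ n ih =>
    rw [Function.iterate_succ_apply, ih (measurable_Pie hNm d hf), ← lintegral_bind_kap hNm d μ hf,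
      hμ]

lemma inv_unique_kap (hNm : ∀ i j, Measurable fun y => N y i j)
    (hN : ∀ i, ∫⁻ y, etot (N y i) ∂φ = 1) (d lam : ProbVec E)
    (hUO : ∀ ε : ℝ≥0∞, 0 < ε → ∃ C : ℝ≥0∞, C < ∞ ∧ ∀ p : (E → ℝ≥0∞) × (E → ℝ≥0∞),
      (etot p.1 < ∞ ∧ etot p.2 < ∞) →
      ed (enormz d p.1) (enormz d p.2) * etot p.1 ≤ ε * etot p.1 + C * HH N φ p)
    (hUn : ∀ ρ : ProbVec E, (∀ j, ∑' i, emb ρ i * ∫⁻ y, N y i j ∂φ = emb ρ j) → ρ = lam)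
    (μ ν : Measure (ProbVec E)) [hμp : IsProbabilityMeasure μ] [hνp : IsProbabilityMeasure ν]
    (hμ : μ.bind (kap (φ := φ) hNm d) = μ) (hν : ν.bind (kap (φ := φ) hNm d) = ν) : μ = ν := by
  refine ext_BLip fun L f hL hf => ?_
  have hfm : Measurable f := (hf.continuous hL).measurable
  have key : ∀ ε : NNReal, 0 < ε → ∫⁻ α, f α ∂μ ≤ ∫⁻ α, f α ∂ν + ε ∧
      ∫⁻ α, f α ∂ν ≤ ∫⁻ α, f α ∂μ + ε := by
    intro ε hε
    have hε' : (0 : ℝ≥0∞) < (ε : ℝ≥0∞) / 2 := ENNReal.half_pos (by exact_mod_cast hε.ne')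
    obtain ⟨n, hn⟩ := (merging hNm hN d lam hUO hL hfm hf hε').exists
    have a := hn μ hμp (inv_bary hNm hN d lam hUn μ hμ)
    have b := hn ν hνp (inv_bary hNm hN d lam hUn ν hν)
    rw [inv_iter hNm d μ hμ hfm] at a
    rw [inv_iter hNm d ν hν hfm] at b
    constructor
    · calc _ ≤ _ := a.1
        _ ≤ ∫⁻ α, f α ∂ν + ε / 2 + ε / 2 := by gcongr; exact b.2
        _ = _ := by rw [add_assoc, ENNReal.add_halves]
    · calc _ ≤ _ := b.1
        _ ≤ ∫⁻ α, f α ∂μ + ε / 2 + ε / 2 := by gcongr; exact a.2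
        _ = _ := by rw [add_assoc, ENNReal.add_halves]
  exact le_antisymm (ENNReal.le_of_forall_pos_le_add fun ε hε _ => (key ε hε).1)
    (ENNReal.le_of_forall_pos_le_add fun ε hε _ => (key ε hε).2)

lemma stat_iff {M : F → E → E → ℝ} (hMmeas : ∀ i j, Measurable fun y => M y i j)
    (hMnn : ∀ y i j, 0 ≤ M y i j)
    (hN : ∀ i, ∫⁻ y, etot (nM M y i) ∂φ = 1) (hPtrans : ∀ i, HasSum (fun j => transMat M φ i j) 1)
    (ρ : ProbVec E) (j : E) :
    ∑' i, emb ρ i * ∫⁻ y, nM M y i j ∂φ = ENNReal.ofReal (∑' i, ρ.1 i * transMat M φ i j) := by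
  have hP0 : ∀ i j, 0 ≤ transMat M φ i j := fun i j => integral_nonneg fun y => hMnn y i j
  have hP1 : ∀ i j, transMat M φ i j ≤ 1 := fun i j => le_hasSum (hPtrans i) j fun k _ => hP0 i k
  rw [ENNReal.ofReal_tsum_of_nonneg (fun i => mul_nonneg (ρ.2.1 i) (hP0 i j))]
  · refine tsum_congr fun i => ?_
    rw [transMat_eq hMmeas hMnn hN, ENNReal.ofReal_mul (ρ.2.1 i)]; rfl
  · refine Summable.of_nonneg_of_le (fun i => mul_nonneg (ρ.2.1 i) (hP0 i j)) (fun i => ?_)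
      ρ.2.2.summable
    exact mul_le_of_le_one_right (ρ.2.1 i) (hP1 i j)

end Part8
/-- If the uniform observability condition (UO) holds, then the filter transition
kernel `Π` admits a unique invariant probability measure. -/
theorem unique_invariant_measure_of_uniform_observability
    {E : Type*} [Countable E] [Nonempty E] [DecidableEq E]
    {F : Type*} [TopologicalSpace F] [PolishSpace F] [MeasurableSpace F] [BorelSpace F]
    (φ : Measure F) [SigmaFinite φ]
    (M : F → E → E → ℝ)
    (hMmeas : ∀ i j, Measurable fun y => M y i j)
    (hMnn : ∀ y i j, 0 ≤ M y i j)
    (hMbd : ∀ᵐ y ∂φ, ∃ C : ℝ, ∀ (i : E) (s : Finset E), ∑ j ∈ s, M y i j ≤ C)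
    (hPtrans : ∀ i, HasSum (fun j => transMat M φ i j) 1)
    (hPirr : ∀ i j : E, ∃ n : ℕ, 0 < matPow (transMat M φ) n i j)
    (lam : ProbVec E)
    (hlamInv : ∀ j, ∑' i, (lam : E → ℝ) i * transMat M φ i j = (lam : E → ℝ) j)
    (hlamUniq : ∀ ρ : ProbVec E,
      (∀ j, ∑' i, (ρ : E → ℝ) i * transMat M φ i j = (ρ : E → ℝ) j) → ρ = lam)
    (Q : ProbVec E → Measure (ℕ → F))
    (hQprob : ∀ μ, IsProbabilityMeasure (Q μ))
    (hQ : ∀ (μ : ProbVec E) (n : ℕ) (A : Set (Fin n → F)), MeasurableSet A →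
      Q μ {y : ℕ → F | (fun k : Fin n => y k) ∈ A} =
        ∫⁻ v in A, ENNReal.ofReal (rowTot (rowIter M (μ : E → ℝ) (List.ofFn v)))
          ∂(Measure.pi fun _ => φ))
    (hUO : ∀ ε : ℝ, 0 < ε → ∃ δ : ℝ, 0 < δ ∧ ∀ μ ν : ProbVec E,
      tvMeasure (Q μ) (Q ν) < ENNReal.ofReal δ → tvDist μ ν < ε) :
    ∃! 𝕄 : ProbabilityMeasure (ProbVec E), IsPiInvariant M φ 𝕄 := by
  have hN := hN_of hMmeas hMnn hMbd Q hQprob hQ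
  have hUO' := abstract_UO hMmeas hMnn hMbd Q hQprob hQ hUO lam
  have hNm := measurable_nM hMmeas
  have hP0 : ∀ i j, 0 ≤ transMat M φ i j := fun i j => integral_nonneg fun y => hMnn y i j
  have hlam : ∀ j, ∑' i, emb lam i * ∫⁻ y, nM M y i j ∂φ = emb lam j := fun j => by
    rw [stat_iff hMmeas hMnn hN hPtrans, hlamInv]; rfl
  have hUn : ∀ ρ : ProbVec E, (∀ j, ∑' i, emb ρ i * ∫⁻ y, nM M y i j ∂φ = emb ρ j) →
      ρ = lam := fun ρ h => hlamUniq ρ fun j => by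
    have h1 := h j
    rw [stat_iff hMmeas hMnn hN hPtrans] at h1
    have h2 := congrArg ENNReal.toReal h1
    rwa [emb_toReal, ENNReal.toReal_ofReal
      (tsum_nonneg fun i => mul_nonneg (ρ.2.1 i) (hP0 i j))] at h2
  obtain ⟨𝕄, h𝕄⟩ := inv_exists (φ := φ) hNm hN lam lam hUO' hlam
  refine ⟨𝕄, (isPi_iff hMmeas hMnn hMbd hN lam 𝕄).2 h𝕄, fun 𝕄' h' => ?_⟩
  have h'' := (isPi_iff hMmeas hMnn hMbd hN lam 𝕄').1 h'
  exact Subtype.ext (inv_unique_kap hNm hN lam lam hUO' hUn (𝕄' : Measure (ProbVec E)) (𝕄 : Measure (ProbVec E)) h'' h𝕄)
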